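/- arXiv:2307.16683 — 8 statements merged into one kernel-verified Lean document; each statement's English description precedes it below -/
import Mathlib

section
/- Let c₁, c₂ : ℝ → ℝ be continuous functions such that c₁(s) → c₁* and c₂(s) → c₂* as s → ∞, where c₁* > 0 and c₂* > 0. Suppose f : ℝ → ℝ is differentiable and satisfies f'(s) = -c₁(s)·f(s) + c₂(s) for all s ∈ ℝ. Then f(s) converges to c₂*/c₁* as s → ∞. -/
/-!
With `L = c₂*/c₁*`, the error `g = f - L` solves `g' = -c₁ g + (c₂ - c₁ L)`, whose forcing term
tends to `0`. A coefficient `c₁ ≥ a > 0` contracts the norm: the right slopes of `‖g‖` are at most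
`-a ‖g‖ + ‖c₂ - c₁ L‖`. Grönwall's inequality with the negative constant `-a`, started late enough
that the forcing term is at most `ε`, bounds `‖g‖` by a function that tends to `ε / a`.
-/

open Filter Topology

section NormedSpace

variable {E : Type*} [NormedAddCommGroup E] [NormedSpace ℝ E]

theorem slope_norm_le_mul_norm_add_norm_slope_sub_smul (g : ℝ → E) {k x z : ℝ} (hxz : x < z)
    (hk : 0 ≤ 1 + (z - x) * k) :
    slope (fun y ↦ ‖g y‖) x z ≤ k * ‖g x‖ + ‖slope g x z - k • g x‖ := by
  have hpos : 0 < z - x := sub_pos.2 hxz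
  have hg : g z = (1 + (z - x) * k) • g x + (z - x) • (slope g x z - k • g x) := by
    rw [smul_sub, sub_smul_slope, vsub_eq_sub]
    module
  have hnorm : ‖g z‖ ≤ (1 + (z - x) * k) * ‖g x‖ + (z - x) * ‖slope g x z - k • g x‖ :=
    calc
      ‖g z‖ ≤ ‖(1 + (z - x) * k) • g x‖ + ‖(z - x) • (slope g x z - k • g x)‖ :=
        (congrArg norm hg).trans_le (norm_add_le _ _)
      _ = (1 + (z - x) * k) * ‖g x‖ + (z - x) * ‖slope g x z - k • g x‖ := by
        rw [norm_smul_of_nonneg hk, norm_smul_of_nonneg hpos.le]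
  rw [slope_def_field, div_le_iff₀ hpos]
  linarith

theorem eventually_slope_norm_lt_of_hasDerivWithinAt_smul_add {g : ℝ → E} {d : E} {k x r : ℝ}
    (hg : HasDerivWithinAt g (k • g x + d) (Set.Ici x) x) (hr : k * ‖g x‖ + ‖d‖ < r) :
    ∀ᶠ z in 𝓝[>] x, slope (fun y ↦ ‖g y‖) x z < r := by
  have hslope : Tendsto (slope g x) (𝓝[>] x) (𝓝 (k • g x + d)) :=
    (hasDerivWithinAt_iff_tendsto_slope' Set.self_notMem_Ioi).1 hg.Ioi_of_Ici
  have hbound : Tendsto (fun z ↦ k * ‖g x‖ + ‖slope g x z - k • g x‖) (𝓝[>] x)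
      (𝓝 (k * ‖g x‖ + ‖d‖)) := by
    simpa only [add_sub_cancel_left] using
      ((hslope.sub_const (k • g x)).norm.const_add (k * ‖g x‖))
  have hfactor : ∀ᶠ z in 𝓝[>] x, 0 < 1 + (z - x) * k := by
    have hcont : Continuous fun z ↦ 1 + (z - x) * k := by fun_prop
    exact nhdsWithin_le_nhds <| hcont.continuousAt.eventually_const_lt (by simp)
  filter_upwards [hbound.eventually_lt_const hr, hfactor, self_mem_nhdsWithin] with z hzr hzk hxz
  exact (slope_norm_le_mul_norm_add_norm_slope_sub_smul g hxz hzk.le).trans_lt hzr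

/-- Only `k`, and not `|k|`, is bounded by `K`, so that, unlike with
`norm_le_gronwallBound_of_norm_deriv_right_le`, a negative `K` can give exponential decay. -/
theorem norm_le_gronwallBound_of_hasDerivWithinAt_smul_add {g d : ℝ → E} {k : ℝ → ℝ}
    {K ε S T : ℝ} (hcont : ContinuousOn g (Set.Icc S T))
    (hg : ∀ s ∈ Set.Ico S T, HasDerivWithinAt g (k s • g s + d s) (Set.Ici s) s)
    (hk : ∀ s ∈ Set.Ico S T, k s ≤ K) (hd : ∀ s ∈ Set.Ico S T, ‖d s‖ ≤ ε) :
    ∀ t ∈ Set.Icc S T, ‖g t‖ ≤ gronwallBound ‖g S‖ K ε (t - S) := by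
  refine le_gronwallBound_of_liminf_deriv_right_le (f' := fun s ↦ k s * ‖g s‖ + ‖d s‖)
    hcont.norm (fun s hs r hr ↦ ?_) le_rfl (fun s hs ↦ ?_)
  · exact (eventually_slope_norm_lt_of_hasDerivWithinAt_smul_add (hg s hs) hr).frequently
  · exact add_le_add (mul_le_mul_of_nonneg_right (hk s hs) (norm_nonneg _)) (hd s hs)

theorem tendsto_gronwallBound_atTop_of_neg (δ ε : ℝ) {K : ℝ} (hK : K < 0) :
    Tendsto (gronwallBound δ K ε) atTop (𝓝 (-ε / K)) := by
  have hexp : Tendsto (fun t ↦ Real.exp (K * t)) atTop (𝓝 0) :=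
    Real.tendsto_exp_atBot.comp (tendsto_id.const_mul_atTop_of_neg hK)
  rw [gronwallBound_of_K_ne_0 hK.ne]
  convert (hexp.const_mul δ).add ((hexp.sub_const 1).const_mul (ε / K)) using 2
  ring

theorem tendsto_zero_of_hasDerivAt_smul_add {g d : ℝ → E} {k : ℝ → ℝ} {K : ℝ} (hK : K < 0)
    (hk : ∀ᶠ s in atTop, k s ≤ K) (hd : Tendsto d atTop (𝓝 0))
    (hg : ∀ᶠ s in atTop, HasDerivAt g (k s • g s + d s) s) :
    Tendsto g atTop (𝓝 0) := by
  refine NormedAddGroup.tendsto_nhds_zero.2 fun η hη ↦ ?_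
  obtain ⟨ε, hε, hεK⟩ : ∃ ε, 0 < ε ∧ ε < -(η * K) :=
    exists_between (neg_pos.2 (mul_neg_of_pos_of_neg hη hK))
  have hεη : -ε / K < η := (div_lt_iff_of_neg hK).2 (lt_neg.1 hεK)
  have hd_le : ∀ᶠ s in atTop, ‖d s‖ ≤ ε :=
    (NormedAddGroup.tendsto_nhds_zero.1 hd ε hε).mono fun _ ↦ le_of_lt
  obtain ⟨S, hS⟩ := eventually_atTop.1 (hg.and (hk.and hd_le))
  have hbound : ∀ t ≥ S, ‖g t‖ ≤ gronwallBound ‖g S‖ K ε (t - S) := fun t ht ↦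
    norm_le_gronwallBound_of_hasDerivWithinAt_smul_add
      (fun s hs ↦ (hS s hs.1).1.continuousAt.continuousWithinAt)
      (fun s hs ↦ (hS s hs.1).1.hasDerivWithinAt)
      (fun s hs ↦ (hS s hs.1).2.1) (fun s hs ↦ (hS s hs.1).2.2) t ⟨ht, le_rfl⟩
  have hlim : Tendsto (fun t ↦ gronwallBound ‖g S‖ K ε (t - S)) atTop (𝓝 (-ε / K)) :=
    (tendsto_gronwallBound_atTop_of_neg _ _ hK).comp
      (tendsto_atTop_add_const_right _ (-S) tendsto_id)
  filter_upwards [hlim.eventually_lt_const hεη, eventually_ge_atTop S] with t htη htS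
  exact (hbound t htS).trans_lt htη

theorem stmt_0_general {c₁ : ℝ → ℝ} {c₂ f : ℝ → E} {c₁star : ℝ} {c₂star : E}
    (hc₁star : 0 < c₁star) (hc₁lim : Tendsto c₁ atTop (𝓝 c₁star))
    (hc₂lim : Tendsto c₂ atTop (𝓝 c₂star))
    (hf : ∀ᶠ s in atTop, HasDerivAt f (-(c₁ s) • f s + c₂ s) s) :
    Tendsto f atTop (𝓝 (c₁star⁻¹ • c₂star)) := by
  set L := c₁star⁻¹ • c₂star with hL
  have hk : ∀ᶠ s in atTop, -(c₁ s) ≤ -(c₁star / 2) :=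
    (hc₁lim.eventually_const_le (half_lt_self hc₁star)).mono fun _ ↦ neg_le_neg
  have hd : Tendsto (fun s ↦ c₂ s - c₁ s • L) atTop (𝓝 0) := by
    simpa only [hL, smul_inv_smul₀ hc₁star.ne', sub_self] using
      hc₂lim.sub (hc₁lim.smul_const L)
  have hg : ∀ᶠ s in atTop,
      HasDerivAt (fun s ↦ f s - L) (-(c₁ s) • (f s - L) + (c₂ s - c₁ s • L)) s := by
    filter_upwards [hf] with s hs
    exact (hs.sub_const L).congr_deriv (by module)
  exact tendsto_sub_nhds_zero_iff.1 <|
    tendsto_zero_of_hasDerivAt_smul_add (neg_lt_zero.2 (half_pos hc₁star)) hk hd hg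

end NormedSpace

/-- Lemma 5.1: a scalar linear ODE `f' = -c₁ f + c₂` with asymptotically
constant positive coefficients has solutions converging to `c₂*/c₁*`. -/
theorem stmt_0 (c₁ c₂ : ℝ → ℝ) (hc₁cont : Continuous c₁) (hc₂cont : Continuous c₂)
    (c₁star c₂star : ℝ) (hc₁star : 0 < c₁star) (hc₂star : 0 < c₂star)
    (hc₁lim : Tendsto c₁ atTop (𝓝 c₁star)) (hc₂lim : Tendsto c₂ atTop (𝓝 c₂star))
    (f : ℝ → ℝ) (hf : ∀ s : ℝ, HasDerivAt f (-(c₁ s) * f s + c₂ s) s) :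
    Tendsto f atTop (𝓝 (c₂star / c₁star)) := by
  rw [div_eq_inv_mul]
  exact stmt_0_general hc₁star hc₁lim hc₂lim (Eventually.of_forall hf)
end

section
/- Let (X, Y) be a solution of the subsystem defined on [s₀, ∞). If 0 < X(s₀) < 1/d and 0 < Y(s₀) < 1/d, then 0 < X(s) < 1/d and 0 < Y(s) < 1/d for all s ≥ s₀; moreover Y is strictly decreasing on [s₀, ∞). -/
open Filter Topology

/-- `(X, Y)` solves the planar subsystem
`X' = X(dX² − 1) + (d−1)Y²`, `Y' = XY(dX − 1)` on the set `I`. -/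
def IsSubsystemSol (d : ℕ) (X Y : ℝ → ℝ) (I : Set ℝ) : Prop :=
  (∀ s ∈ I, HasDerivAt X (X s * ((d : ℝ) * X s ^ 2 - 1) + ((d : ℝ) - 1) * Y s ^ 2) s) ∧
  (∀ s ∈ I, HasDerivAt Y (X s * Y s * ((d : ℝ) * X s - 1)) s)

/-!
Write `f` for any of the four functions `X`, `1/d - X`, `Y`, `1/d - Y`. As long as all four are
positive, the equations give `f' ≥ -f`, so `exp s * f s` is nondecreasing and `f` is still positive
at the end of any such interval. Hence there is no first time at which one of them fails to be
positive. Inside the square, `Y' = XY(dX - 1) < 0`.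
-/

open Set

theorem mapsTo_of_forall_mapsTo_Ico {α E : Type*} [ConditionallyCompleteLinearOrder α]
    [TopologicalSpace α] [OrderTopology α] [TopologicalSpace E] {γ : α → E} {I : Set α} {U : Set E}
    {a : α} (hI : I.OrdConnected) (ha : IsLeast I a) (hγ : ContinuousOn γ I) (hU : IsOpen U)
    (hstep : ∀ b ∈ I, MapsTo γ (Ico a b) U → γ b ∈ U) : MapsTo γ I U := by
  intro s hs
  by_contra hsU
  have hsub : Icc a s ⊆ I := hI.out ha.1 hs
  have hclosed : IsClosed (Icc a s ∩ γ ⁻¹' Uᶜ) :=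
    (hγ.mono hsub).preimage_isClosed_of_isClosed isClosed_Icc hU.isClosed_compl
  obtain ⟨T, ⟨hT, hTU⟩, hT_least⟩ :=
    (isCompact_Icc.of_isClosed_subset hclosed inter_subset_left).exists_isLeast
      ⟨s, ⟨ha.2 hs, le_rfl⟩, hsU⟩
  refine hTU (hstep T (hsub hT) fun t ht ↦ ?_)
  by_contra htU
  exact ht.2.not_ge (hT_least ⟨⟨ht.1, ht.2.le.trans hT.2⟩, htU⟩)

theorem monotoneOn_exp_mul_of_deriv_add_mul_nonneg {f f' : ℝ → ℝ} {k : ℝ} {D : Set ℝ}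
    (hD : Convex ℝ D) (hf : ∀ s ∈ D, HasDerivWithinAt f (f' s) D s)
    (hf' : ∀ s ∈ interior D, 0 ≤ f' s + k * f s) :
    MonotoneOn (fun s ↦ Real.exp (k * s) * f s) D := by
  have hderiv : ∀ s ∈ D, HasDerivWithinAt (fun s ↦ Real.exp (k * s) * f s)
      (Real.exp (k * s) * (f' s + k * f s)) D s := fun s hs ↦ by
    have hexp : HasDerivAt (fun s ↦ Real.exp (k * s)) (Real.exp (k * s) * k) s := by
      simpa using ((hasDerivAt_id s).const_mul k).exp
    exact (hexp.hasDerivWithinAt.mul (hf s hs)).congr_deriv (by ring)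
  exact monotoneOn_of_hasDerivWithinAt_nonneg hD (fun s hs ↦ (hderiv s hs).continuousWithinAt)
    (fun s hs ↦ (hderiv s (interior_subset hs)).mono interior_subset)
    fun s hs ↦ mul_nonneg (Real.exp_pos _).le (hf' s hs)

theorem pos_of_deriv_add_mul_nonneg {f f' : ℝ → ℝ} {k a b : ℝ} (hab : a ≤ b)
    (hf : ∀ s ∈ Icc a b, HasDerivWithinAt f (f' s) (Icc a b) s)
    (hf' : ∀ s ∈ Ioo a b, 0 ≤ f' s + k * f s) (ha : 0 < f a) : 0 < f b := by
  have hmono := monotoneOn_exp_mul_of_deriv_add_mul_nonneg (convex_Icc a b) hf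
    (interior_Icc (a := a) (b := b) ▸ hf')
  have hle := hmono (left_mem_Icc.2 hab) (right_mem_Icc.2 hab) hab
  exact pos_of_mul_pos_right ((mul_pos (Real.exp_pos _) ha).trans_le hle) (Real.exp_pos _).le

theorem forall_pos_of_deriv_add_mul_nonneg {ι : Type*} [Finite ι] {f f' : ι → ℝ → ℝ} {k : ι → ℝ}
    {I : Set ℝ} {a : ℝ} (hI : I.OrdConnected) (ha : IsLeast I a)
    (hf : ∀ i, ∀ s ∈ I, HasDerivWithinAt (f i) (f' i s) I s)
    (hf' : ∀ s ∈ I, (∀ i, 0 < f i s) → ∀ i, 0 ≤ f' i s + k i * f i s)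
    (hpos : ∀ i, 0 < f i a) : ∀ s ∈ I, ∀ i, 0 < f i s := by
  have hcont : ContinuousOn (fun s i ↦ f i s) I :=
    continuousOn_pi.2 fun i s hs ↦ (hf i s hs).continuousWithinAt
  have hopen : IsOpen {v : ι → ℝ | ∀ i, 0 < v i} := by
    simpa only [ofPred_forall] using
      isOpen_iInter_of_finite fun i ↦ isOpen_lt continuous_const (continuous_apply i)
  refine mapsTo_of_forall_mapsTo_Ico hI ha hcont hopen fun b hb hbefore i ↦ ?_
  have hsub : Icc a b ⊆ I := hI.out ha.1 hb
  exact pos_of_deriv_add_mul_nonneg (ha.2 hb) (fun s hs ↦ (hf i s (hsub hs)).mono hsub)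
    (fun s hs ↦ hf' s (hsub (Ioo_subset_Icc_self hs)) (hbefore (Ioo_subset_Ico_self hs)) i)
    (hpos i)

section VectorField

/-- The `X`-component of the vector field of the subsystem, with a real parameter `d`. -/
def xVelocity (d x y : ℝ) : ℝ := x * (d * x ^ 2 - 1) + (d - 1) * y ^ 2

/-- The `Y`-component of the vector field of the subsystem, with a real parameter `d`. -/
def yVelocity (d x y : ℝ) : ℝ := x * y * (d * x - 1)

variable {d x y : ℝ}

theorem neg_le_xVelocity (hd : 1 ≤ d) (hx : 0 ≤ x) : -x ≤ xVelocity d x y := by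
  have hcube : 0 ≤ d * x ^ 3 := by positivity
  have hsq : 0 ≤ (d - 1) * y ^ 2 := mul_nonneg (sub_nonneg.2 hd) (sq_nonneg y)
  unfold xVelocity
  linarith

theorem xVelocity_le (hd : 1 ≤ d) (hx : 0 ≤ x) (hxd : x ≤ 1 / d) (hy : 0 ≤ y) (hyd : y ≤ 1 / d) :
    xVelocity d x y ≤ 1 / d - x := by
  have hfactor : 1 / d - x - xVelocity d x (1 / d) = (1 / d - x) * (d * x ^ 2 + x + 1 / d) := by
    unfold xVelocity
    field_simp
    ring
  calc xVelocity d x y ≤ xVelocity d x (1 / d) := by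
        unfold xVelocity
        have : 0 ≤ d - 1 := sub_nonneg.2 hd
        gcongr
    _ ≤ 1 / d - x := by
        rw [← sub_nonneg, hfactor]
        exact mul_nonneg (sub_nonneg.2 hxd) (by positivity)

theorem neg_le_yVelocity (hd : 1 ≤ d) (hy : 0 ≤ y) : -y ≤ yVelocity d x y := by
  have hquad : 0 ≤ d * x ^ 2 - x + 1 := by nlinarith [sq_nonneg (x - 1), sq_nonneg x]
  have hprod : 0 ≤ y * (d * x ^ 2 - x + 1) := mul_nonneg hy hquad
  unfold yVelocity
  linarith

theorem yVelocity_neg (hd : 0 < d) (hx : 0 < x) (hxd : x < 1 / d) (hy : 0 < y) :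
    yVelocity d x y < 0 :=
  mul_neg_of_pos_of_neg (mul_pos hx hy) (sub_neg.2 ((lt_div_iff₀' hd).1 hxd))

end VectorField

/-- `(X, Y)` solves the subsystem with real parameter `d` on `I`. Derivatives are taken within `I`,
so they are one-sided at the endpoints of an interval. -/
structure IsSubsystemSolWithin (d : ℝ) (X Y : ℝ → ℝ) (I : Set ℝ) : Prop where
  hasDerivWithinAt_fst : ∀ s ∈ I, HasDerivWithinAt X (xVelocity d (X s) (Y s)) I s
  hasDerivWithinAt_snd : ∀ s ∈ I, HasDerivWithinAt Y (yVelocity d (X s) (Y s)) I s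

theorem IsSubsystemSol.isSubsystemSolWithin {d : ℕ} {X Y : ℝ → ℝ} {I : Set ℝ}
    (h : IsSubsystemSol d X Y I) : IsSubsystemSolWithin d X Y I :=
  ⟨fun s hs ↦ (h.1 s hs).hasDerivWithinAt, fun s hs ↦ (h.2 s hs).hasDerivWithinAt⟩

namespace IsSubsystemSolWithin

variable {d : ℝ} {X Y : ℝ → ℝ} {I : Set ℝ}

theorem mem_square (h : IsSubsystemSolWithin d X Y I) (hd : 1 ≤ d) (hI : I.OrdConnected) {s₀ : ℝ}
    (hs₀ : IsLeast I s₀) (hX₀ : 0 < X s₀ ∧ X s₀ < 1 / d) (hY₀ : 0 < Y s₀ ∧ Y s₀ < 1 / d) :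
    ∀ s ∈ I, (0 < X s ∧ X s < 1 / d) ∧ (0 < Y s ∧ Y s < 1 / d) := by
  let f : Fin 4 → ℝ → ℝ := ![X, fun s ↦ 1 / d - X s, Y, fun s ↦ 1 / d - Y s]
  let f' : Fin 4 → ℝ → ℝ := ![fun s ↦ xVelocity d (X s) (Y s), fun s ↦ -xVelocity d (X s) (Y s),
    fun s ↦ yVelocity d (X s) (Y s), fun s ↦ -yVelocity d (X s) (Y s)]
  have forall_pos_iff (s : ℝ) :
      (∀ i, 0 < f i s) ↔ (0 < X s ∧ X s < 1 / d) ∧ (0 < Y s ∧ Y s < 1 / d) := by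
    simp [f, Fin.forall_fin_succ, and_assoc]
  have hderiv : ∀ i, ∀ s ∈ I, HasDerivWithinAt (f i) (f' i s) I s := fun i s hs ↦ by
    have hX := h.hasDerivWithinAt_fst s hs
    have hY := h.hasDerivWithinAt_snd s hs
    fin_cases i
    exacts [hX, hX.const_sub _, hY, hY.const_sub _]
  have hineq : ∀ s ∈ I, (∀ i, 0 < f i s) → ∀ i, 0 ≤ f' i s + 1 * f i s := fun s _ hs i ↦ by
    obtain ⟨⟨hX, hXd⟩, hY, hYd⟩ := (forall_pos_iff s).1 hs
    have hX_lower : 0 ≤ xVelocity d (X s) (Y s) + 1 * X s := by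
      linarith [neg_le_xVelocity (y := Y s) hd hX.le]
    have hX_upper : 0 ≤ -xVelocity d (X s) (Y s) + 1 * (1 / d - X s) := by
      linarith [xVelocity_le hd hX.le hXd.le hY.le hYd.le]
    have hY_lower : 0 ≤ yVelocity d (X s) (Y s) + 1 * Y s := by
      linarith [neg_le_yVelocity (x := X s) hd hY.le]
    have hY_upper : 0 ≤ -yVelocity d (X s) (Y s) + 1 * (1 / d - Y s) := by
      linarith [yVelocity_neg (zero_lt_one.trans_le hd) hX hXd hY]
    fin_cases i
    exacts [hX_lower, hX_upper, hY_lower, hY_upper]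
  intro s hs
  exact (forall_pos_iff s).1 <| forall_pos_of_deriv_add_mul_nonneg hI hs₀ hderiv hineq
    ((forall_pos_iff s₀).2 ⟨hX₀, hY₀⟩) s hs

theorem strictAntiOn_snd (h : IsSubsystemSolWithin d X Y I) (hd : 0 < d) (hI : I.OrdConnected)
    (hX : ∀ s ∈ I, 0 < X s ∧ X s < 1 / d) (hY : ∀ s ∈ I, 0 < Y s) : StrictAntiOn Y I :=
  strictAntiOn_of_hasDerivWithinAt_neg hI.convex
    (fun s hs ↦ (h.hasDerivWithinAt_snd s hs).continuousWithinAt)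
    (fun s hs ↦ (h.hasDerivWithinAt_snd s (interior_subset hs)).mono interior_subset)
    fun s hs ↦ have hs := interior_subset hs
      yVelocity_neg hd (hX s hs).1 (hX s hs).2 (hY s hs)

end IsSubsystemSolWithin

theorem stmt_1_general {d : ℝ} (hd : 1 ≤ d) {I : Set ℝ} (hI : I.OrdConnected) {s₀ : ℝ}
    (hs₀ : IsLeast I s₀) {X Y : ℝ → ℝ} (hsol : IsSubsystemSolWithin d X Y I)
    (hX₀ : 0 < X s₀ ∧ X s₀ < 1 / d) (hY₀ : 0 < Y s₀ ∧ Y s₀ < 1 / d) :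
    (∀ s ∈ I, (0 < X s ∧ X s < 1 / d) ∧ (0 < Y s ∧ Y s < 1 / d)) ∧ StrictAntiOn Y I := by
  have hsquare := hsol.mem_square hd hI hs₀ hX₀ hY₀
  exact ⟨hsquare, hsol.strictAntiOn_snd (zero_lt_one.trans_le hd) hI
    (fun s hs ↦ (hsquare s hs).1) fun s hs ↦ (hsquare s hs).2.1⟩

/-- The region `0 < X, Y < 1/d` is invariant, and `Y` is strictly decreasing there. -/
theorem stmt_1 (d : ℕ) (hd : 2 ≤ d) (s₀ : ℝ) (X Y : ℝ → ℝ)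
    (hsol : IsSubsystemSol d X Y (Set.Ici s₀))
    (hX₀ : 0 < X s₀ ∧ X s₀ < 1 / d) (hY₀ : 0 < Y s₀ ∧ Y s₀ < 1 / d) :
    (∀ s ≥ s₀, (0 < X s ∧ X s < 1 / d) ∧ (0 < Y s ∧ Y s < 1 / d)) ∧
    StrictAntiOn Y (Set.Ici s₀) :=
  stmt_1_general (Nat.one_le_cast.2 (one_le_two.trans hd)) ordConnected_Ici isLeast_Ici
    hsol.isSubsystemSolWithin hX₀ hY₀
end

section
/- Let (X, Y) be a solution of the subsystem defined on [s₀, ∞) with 0 < X(s₀) < 1/d and 0 < Y(s₀) < 1/d. Then X(s) → 0 and Y(s) → 0 as s → ∞. -/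
open Filter Topology

/-!
In the box `0 < X, Y < 1/d` the distance `δ` to each of the four faces satisfies `δ' ≥ -δ`, so a
trajectory starting in the box never leaves it. There `Y` decreases, hence `Y ≤ Y s₀ < 1/d`, which
keeps `X` below some level smaller than `1/d`: `1 - dX ≥ k > 0` for all time. If `Y` stayed above
some `L > 0`, then `kLX - Y` would have derivative at least `kL(d-1)L²` although it is
bounded above; so `Y → 0`. Finally `X' ≤ -kX + (d-1)Y²` is exponential decay with a vanishing
forcing term, so `X → 0`.
-/

namespace Subsystem

open Set

section DifferentialInequalities

variable {f f' : ℝ → ℝ} {a b : ℝ}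

theorem sub_le_mul_exp_of_deriv_le {c k : ℝ} (hab : a ≤ b)
    (hf : ∀ s ∈ Icc a b, HasDerivWithinAt f (f' s) (Icc a b) s)
    (hle : ∀ s ∈ Ico a b, f' s ≤ k * (c - f s)) :
    f b - c ≤ (f a - c) * Real.exp (-k * (b - a)) := by
  have hcont : ContinuousOn (fun s => f s - c) (Icc a b) :=
    fun s hs => ((hf s hs).sub_const c).continuousWithinAt
  have hright : ∀ s ∈ Ico a b, HasDerivWithinAt (fun s => f s - c) (f' s) (Ici s) s :=
    fun s hs => ((hf s (Ico_subset_Icc_self hs)).sub_const c).mono_of_mem_nhdsWithin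
      (Icc_mem_nhdsGE_of_mem hs)
  rw [← gronwallBound_ε0]
  exact le_gronwallBound_of_liminf_deriv_right_le hcont
    (fun s hs _ hr => (hright s hs).liminf_right_slope_le hr) le_rfl
    (fun s hs => by linarith [hle s hs]) b (right_mem_Icc.2 hab)

theorem le_of_deriv_le_mul_sub {c k : ℝ} (hab : a ≤ b)
    (hf : ∀ s ∈ Icc a b, HasDerivWithinAt f (f' s) (Icc a b) s)
    (hle : ∀ s ∈ Ico a b, f' s ≤ k * (c - f s)) (ha : f a ≤ c) : f b ≤ c :=
  sub_nonpos.1 <| (sub_le_mul_exp_of_deriv_le hab hf hle).trans <|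
    mul_nonpos_of_nonpos_of_nonneg (sub_nonpos.2 ha) (Real.exp_pos _).le

theorem pos_of_neg_mul_le_deriv {k : ℝ} (hab : a ≤ b)
    (hf : ∀ s ∈ Icc a b, HasDerivWithinAt f (f' s) (Icc a b) s)
    (hle : ∀ s ∈ Ico a b, -k * f s ≤ f' s) (ha : 0 < f a) : 0 < f b := by
  have hneg : -f b - 0 ≤ (-f a - 0) * Real.exp (-k * (b - a)) :=
    sub_le_mul_exp_of_deriv_le hab (fun s hs => (hf s hs).fun_neg)
      fun s hs => by linarith [hle s hs]
  have hpos : 0 < f a * Real.exp (-k * (b - a)) := by positivity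
  linarith

theorem tendsto_zero_of_deriv_le_neg_mul_add {g : ℝ → ℝ} {k : ℝ} (hk : 0 < k)
    (hf : ∀ s ∈ Ici a, HasDerivWithinAt f (f' s) (Ici a) s)
    (hle : ∀ s ∈ Ici a, f' s ≤ -k * f s + g s) (hnonneg : ∀ s ∈ Ici a, 0 ≤ f s)
    (hg : Tendsto g atTop (𝓝 0)) : Tendsto f atTop (𝓝 0) := by
  refine tendsto_order.2 ⟨fun c hc => ?_, fun ε hε => ?_⟩
  · filter_upwards [Ici_mem_atTop a] with t ht using hc.trans_le (hnonneg t ht)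
  obtain ⟨T, hT⟩ : ∃ T, ∀ s ≥ T, g s < k * (ε / 2) ∧ a ≤ s :=
    eventually_atTop.1 <| (hg.eventually_lt_const (by positivity)).and (eventually_ge_atTop a)
  have haT : a ≤ T := (hT T le_rfl).2
  have hdecay : ∀ t ≥ T, f t ≤ ε / 2 + (f T - ε / 2) * Real.exp (-k * (t - T)) := by
    intro t ht
    have := sub_le_mul_exp_of_deriv_le (c := ε / 2) (k := k) ht
      (fun s hs => (hf s (haT.trans hs.1)).mono fun r hr => haT.trans hr.1)
      fun s hs => by linarith [hle s (haT.trans hs.1), (hT s hs.1).1]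
    linarith
  have hexp : Tendsto (fun t => Real.exp (-k * (t - T))) atTop (𝓝 0) :=
    Real.tendsto_exp_atBot.comp <|
      (tendsto_atTop_add_const_right _ (-T) tendsto_id).const_mul_atTop_of_neg (neg_lt_zero.2 hk)
  have hbound : Tendsto (fun t => ε / 2 + (f T - ε / 2) * Real.exp (-k * (t - T))) atTop
      (𝓝 (ε / 2)) := by
    simpa only [mul_zero, add_zero] using (hexp.const_mul (f T - ε / 2)).const_add (ε / 2)
  filter_upwards [hbound.eventually_lt_const (half_lt_self hε), Ici_mem_atTop T] with t hlt ht
    using (hdecay t ht).trans_lt hlt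

theorem tendsto_atTop_of_const_le_deriv {c : ℝ} (hc : 0 < c)
    (hf : ∀ s ∈ Ici a, HasDerivWithinAt f (f' s) (Ici a) s) (hle : ∀ s ∈ Ici a, c ≤ f' s) :
    Tendsto f atTop atTop := by
  have hderiv : ∀ s ∈ Ici a, HasDerivWithinAt (fun s => f s - c * s) (f' s - c) (Ici a) s :=
    fun s hs => by simpa using (hf s hs).fun_sub ((hasDerivWithinAt_id s _).const_mul c)
  have hmono : MonotoneOn (fun s => f s - c * s) (Ici a) :=
    monotoneOn_of_hasDerivWithinAt_nonneg (convex_Ici a)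
      (fun s hs => (hderiv s hs).continuousWithinAt)
      (fun s hs => (hderiv s (interior_subset hs)).mono interior_subset)
      (fun s hs => sub_nonneg.2 (hle s (interior_subset hs)))
  have hline : Tendsto (fun t => c * t + (f a - c * a)) atTop atTop :=
    tendsto_atTop_add_const_right _ _ (tendsto_id.const_mul_atTop hc)
  refine tendsto_atTop_mono' _ ?_ hline
  filter_upwards [Ici_mem_atTop a] with t ht
  linarith [hmono self_mem_Ici ht ht]

end DifferentialInequalities

theorem mem_of_isOpen_of_forall_Ico {ι α : Type*} [ConditionallyCompleteLinearOrder ι]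
    [TopologicalSpace ι] [OrderTopology ι] [TopologicalSpace α] {γ : ι → α} {U : Set α} {a : ι}
    (hU : IsOpen U) (hγ : ContinuousOn γ (Ici a))
    (hstep : ∀ t ∈ Ici a, (∀ s ∈ Ico a t, γ s ∈ U) → γ t ∈ U) :
    ∀ t ∈ Ici a, γ t ∈ U := by
  by_contra! hexit
  let exits : Set ι := Ici a ∩ γ ⁻¹' Uᶜ
  have hclosed : IsClosed exits := hγ.preimage_isClosed_of_isClosed isClosed_Ici hU.isClosed_compl
  have hbdd : BddBelow exits := bddBelow_Ici.mono inter_subset_left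
  have hfirst : sInf exits ∈ exits := hclosed.csInf_mem hexit hbdd
  refine hfirst.2 (hstep _ hfirst.1 fun s hs => ?_)
  by_contra hsU
  exact hs.2.not_ge (csInf_le hbdd ⟨hs.1, hsU⟩)

/-- The `X`-component of the vector field of the subsystem, for a real parameter `d`. -/
def fieldX (d x y : ℝ) : ℝ := x * (d * x ^ 2 - 1) + (d - 1) * y ^ 2

/-- The `Y`-component of the vector field of the subsystem, for a real parameter `d`. -/
def fieldY (d x y : ℝ) : ℝ := x * y * (d * x - 1)

/-- The open square `0 < x, y < 1/d`, forward invariant under the subsystem when `d > 1`. -/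
def box (d : ℝ) : Set (ℝ × ℝ) := Ioo 0 (1 / d) ×ˢ Ioo 0 (1 / d)

section VectorField

variable {d x y : ℝ}

theorem neg_add_le_fieldX (hd : 0 ≤ d) (hx : 0 ≤ x) : -x + (d - 1) * y ^ 2 ≤ fieldX d x y := by
  have : 0 ≤ d * x ^ 3 := by positivity
  unfold fieldX
  linarith

theorem fieldX_le_sub (hd : 0 < d) (hx : 0 ≤ x) (hxd : x ≤ 1 / d) :
    fieldX d x y ≤ (1 / d - x) - (d - 1) * ((1 / d) ^ 2 - y ^ 2) := by
  have hfactor : (1 / d - x) - (d - 1) * ((1 / d) ^ 2 - y ^ 2) - fieldX d x y =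
      (1 / d - x) * (d * x ^ 2 + x + 1 / d) := by
    unfold fieldX
    field_simp
    ring
  have : 0 ≤ (1 / d - x) * (d * x ^ 2 + x + 1 / d) :=
    mul_nonneg (sub_nonneg.2 hxd) (by positivity)
  linarith

theorem fieldX_le_neg_mul_add {k : ℝ} (hd : 0 ≤ d) (hx : 0 ≤ x) (hx1 : x ≤ 1)
    (hk : k ≤ 1 - d * x) : fieldX d x y ≤ -k * x + (d - 1) * y ^ 2 := by
  have hsq : d * x ^ 2 ≤ d * x := by gcongr; exact pow_le_of_le_one hx hx1 two_ne_zero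
  have : x * (d * x ^ 2 - 1) ≤ x * -k := mul_le_mul_of_nonneg_left (by linarith) hx
  unfold fieldX
  linarith

theorem neg_le_fieldY (hd : 0 ≤ d) (hx1 : x ≤ 1) (hy : 0 ≤ y) : -y ≤ fieldY d x y := by
  have : 0 ≤ y * ((1 - x) + d * x ^ 2) :=
    mul_nonneg hy (add_nonneg (sub_nonneg.2 hx1) (by positivity))
  unfold fieldY
  linarith

theorem fieldY_le_neg_mul {k : ℝ} (hx : 0 ≤ x) (hy : 0 ≤ y) (hk : k ≤ 1 - d * x) :
    fieldY d x y ≤ -(k * x * y) := by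
  have : x * y * k ≤ x * y * (1 - d * x) := by gcongr
  unfold fieldY
  linarith

theorem fieldY_nonpos_of_mem_box (hd : 0 < d) (h : (x, y) ∈ box d) : fieldY d x y ≤ 0 := by
  obtain ⟨⟨hx, hxd⟩, hy, -⟩ := h
  have hdx : 0 ≤ 1 - d * x := sub_nonneg.2 <| by simpa [mul_comm] using ((lt_div_iff₀ hd).1 hxd).le
  simpa using fieldY_le_neg_mul hx.le hy.le hdx

end VectorField

/-- `(X, Y)` solves the subsystem on `I` for a real parameter `d`. Derivatives are taken within `I`,
so they are one-sided at an endpoint of an interval. -/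
structure IsSolOn (d : ℝ) (X Y : ℝ → ℝ) (I : Set ℝ) : Prop where
  hasDerivWithinAt_X : ∀ s ∈ I, HasDerivWithinAt X (fieldX d (X s) (Y s)) I s
  hasDerivWithinAt_Y : ∀ s ∈ I, HasDerivWithinAt Y (fieldY d (X s) (Y s)) I s

end Subsystem

theorem IsSubsystemSol.isSolOn {d : ℕ} {X Y : ℝ → ℝ} {I : Set ℝ} (h : IsSubsystemSol d X Y I) :
    Subsystem.IsSolOn d X Y I where
  hasDerivWithinAt_X s hs := (h.1 s hs).hasDerivWithinAt
  hasDerivWithinAt_Y s hs := (h.2 s hs).hasDerivWithinAt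

namespace Subsystem.IsSolOn

open Set

theorem mono {d : ℝ} {X Y : ℝ → ℝ} {I J : Set ℝ} (h : IsSolOn d X Y J) (hIJ : I ⊆ J) :
    IsSolOn d X Y I where
  hasDerivWithinAt_X s hs := (h.hasDerivWithinAt_X s (hIJ hs)).mono hIJ
  hasDerivWithinAt_Y s hs := (h.hasDerivWithinAt_Y s (hIJ hs)).mono hIJ

variable {d a b : ℝ} {X Y : ℝ → ℝ}

theorem mem_box_right (hd : 1 < d) (hab : a ≤ b) (h : IsSolOn d X Y (Icc a b))
    (ha : (X a, Y a) ∈ box d) (hbox : ∀ s ∈ Ico a b, (X s, Y s) ∈ box d) :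
    (X b, Y b) ∈ box d := by
  have hd0 : 0 < d := one_pos.trans hd
  have hd1 : 1 / d < 1 := (div_lt_one hd0).2 hd
  refine ⟨⟨?_, sub_pos.1 ?_⟩, ?_, sub_pos.1 ?_⟩
  · refine pos_of_neg_mul_le_deriv (k := 1) hab h.hasDerivWithinAt_X (fun s hs => ?_) ha.1.1
    have : 0 ≤ (d - 1) * Y s ^ 2 := mul_nonneg (by linarith) (sq_nonneg _)
    linarith [neg_add_le_fieldX (y := Y s) hd0.le (hbox s hs).1.1.le]
  · refine pos_of_neg_mul_le_deriv (f := fun s => 1 / d - X s) (k := 1) hab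
      (fun s hs => (h.hasDerivWithinAt_X s hs).const_sub _) (fun s hs => ?_) (sub_pos.2 ha.1.2)
    obtain ⟨⟨hx, hxd⟩, hy, hyd⟩ := hbox s hs
    have : 0 ≤ (d - 1) * ((1 / d) ^ 2 - Y s ^ 2) :=
      mul_nonneg (by linarith) (sub_nonneg.2 (pow_le_pow_left₀ hy.le hyd.le 2))
    linarith [fieldX_le_sub (y := Y s) hd0 hx.le hxd.le]
  · refine pos_of_neg_mul_le_deriv (k := 1) hab h.hasDerivWithinAt_Y (fun s hs => ?_) ha.2.1
    obtain ⟨⟨-, hxd⟩, hy, -⟩ := hbox s hs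
    linarith [neg_le_fieldY hd0.le (hxd.le.trans hd1.le) hy.le]
  · refine pos_of_neg_mul_le_deriv (f := fun s => 1 / d - Y s) (k := 1) hab
      (fun s hs => (h.hasDerivWithinAt_Y s hs).const_sub _) (fun s hs => ?_) (sub_pos.2 ha.2.2)
    linarith [fieldY_nonpos_of_mem_box hd0 (hbox s hs), (hbox s hs).2.2]

theorem mem_box (hd : 1 < d) (h : IsSolOn d X Y (Ici a)) (ha : (X a, Y a) ∈ box d) :
    ∀ t ∈ Ici a, (X t, Y t) ∈ box d := by
  have hcont : ContinuousOn (fun t => (X t, Y t)) (Ici a) := fun t ht =>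
    (h.hasDerivWithinAt_X t ht).continuousWithinAt.prodMk
      (h.hasDerivWithinAt_Y t ht).continuousWithinAt
  exact mem_of_isOpen_of_forall_Ico (isOpen_Ioo.prod isOpen_Ioo) hcont fun t ht hbox =>
    mem_box_right hd ht (h.mono Icc_subset_Ici_self) ha hbox

theorem antitoneOn_Y (hd : 0 < d) (h : IsSolOn d X Y (Ici a))
    (hbox : ∀ t ∈ Ici a, (X t, Y t) ∈ box d) : AntitoneOn Y (Ici a) :=
  antitoneOn_of_hasDerivWithinAt_nonpos (convex_Ici a)
    (fun s hs => (h.hasDerivWithinAt_Y s hs).continuousWithinAt)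
    (fun s hs => (h.hasDerivWithinAt_Y s (interior_subset hs)).mono interior_subset)
    (fun s hs => fieldY_nonpos_of_mem_box hd (hbox s (interior_subset hs)))

theorem exists_pos_le_one_sub_mul_X (hd : 1 < d) (h : IsSolOn d X Y (Ici a))
    (hbox : ∀ t ∈ Ici a, (X t, Y t) ∈ box d) : ∃ k > 0, ∀ t ∈ Ici a, k ≤ 1 - d * X t := by
  have hd0 : 0 < d := one_pos.trans hd
  obtain ⟨⟨-, hxd⟩, hy, hyd⟩ := hbox a self_mem_Ici
  let c := max (X a) (1 / d - (d - 1) * ((1 / d) ^ 2 - Y a ^ 2))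
  have hc : c < 1 / d := max_lt hxd <| sub_lt_self _ <|
    mul_pos (sub_pos.2 hd) (sub_pos.2 (pow_lt_pow_left₀ hyd hy.le two_ne_zero))
  have hXc : ∀ t ∈ Ici a, X t ≤ c := by
    intro t ht
    refine le_of_deriv_le_mul_sub (k := 1) ht (h.mono Icc_subset_Ici_self).hasDerivWithinAt_X
      (fun s hs => ?_) (le_max_left _ _)
    obtain ⟨⟨hx, hxd⟩, hy, -⟩ := hbox s hs.1
    have hYs : Y s ≤ Y a := h.antitoneOn_Y hd0 hbox self_mem_Ici hs.1 hs.1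
    have hforce : (d - 1) * Y s ^ 2 ≤ (d - 1) * Y a ^ 2 :=
      mul_le_mul_of_nonneg_left (pow_le_pow_left₀ hy.le hYs 2) (by linarith)
    have hle_c : 1 / d - (d - 1) * ((1 / d) ^ 2 - Y a ^ 2) ≤ c := le_max_right _ _
    linarith [fieldX_le_sub (y := Y s) hd0 hx.le hxd.le]
  refine ⟨1 - d * c, sub_pos.2 ?_, fun t ht => ?_⟩
  · simpa [mul_comm] using (lt_div_iff₀ hd0).1 hc
  · linarith [mul_le_mul_of_nonneg_left (hXc t ht) hd0.le]

theorem exists_Y_lt {k L : ℝ} (hd : 1 < d) (h : IsSolOn d X Y (Ici a))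
    (hbox : ∀ t ∈ Ici a, (X t, Y t) ∈ box d) (hk : 0 < k) (hkX : ∀ t ∈ Ici a, k ≤ 1 - d * X t)
    (hL : 0 < L) : ∃ t ∈ Ici a, Y t < L := by
  by_contra! hYL
  have hd0 : 0 < d := one_pos.trans hd
  have hgrowth : Tendsto (fun t => k * L * X t - Y t) atTop atTop := by
    have hrate : 0 < k * L * ((d - 1) * L ^ 2) := by have := sub_pos.2 hd; positivity
    refine tendsto_atTop_of_const_le_deriv hrate (fun s hs =>
      ((h.hasDerivWithinAt_X s hs).const_mul (k * L)).fun_sub (h.hasDerivWithinAt_Y s hs))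
      fun s hs => ?_
    obtain ⟨⟨hx, -⟩, hy, -⟩ := hbox s hs
    have hforce : (d - 1) * L ^ 2 ≤ (d - 1) * Y s ^ 2 :=
      mul_le_mul_of_nonneg_left (pow_le_pow_left₀ hL.le (hYL s hs) 2) (by linarith)
    have hX' : k * L * (-X s + (d - 1) * L ^ 2) ≤ k * L * fieldX d (X s) (Y s) :=
      mul_le_mul_of_nonneg_left
        (by linarith [neg_add_le_fieldX (y := Y s) hd0.le hx.le]) (by positivity)
    have hY' : k * X s * L ≤ k * X s * Y s :=
      mul_le_mul_of_nonneg_left (hYL s hs) (by positivity)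
    linarith [fieldY_le_neg_mul hx.le hy.le (hkX s hs)]
  obtain ⟨t, hbig, ht⟩ :=
    ((hgrowth.eventually_gt_atTop (k * L * (1 / d))).and (eventually_ge_atTop a)).exists
  obtain ⟨⟨-, hxd⟩, hy, -⟩ := hbox t ht
  have : k * L * X t ≤ k * L * (1 / d) := by gcongr
  linarith

theorem tendsto_Y (hd : 1 < d) (h : IsSolOn d X Y (Ici a)) (ha : (X a, Y a) ∈ box d) :
    Tendsto Y atTop (𝓝 0) := by
  have hbox := h.mem_box hd ha
  obtain ⟨k, hk, hkX⟩ := h.exists_pos_le_one_sub_mul_X hd hbox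
  refine tendsto_order.2 ⟨fun c hc => ?_, fun ε hε => ?_⟩
  · filter_upwards [Ici_mem_atTop a] with t ht using hc.trans (hbox t ht).2.1
  obtain ⟨T, hT, hYT⟩ := h.exists_Y_lt hd hbox hk hkX hε
  filter_upwards [Ici_mem_atTop T] with t ht
  exact (h.antitoneOn_Y (one_pos.trans hd) hbox hT (hT.out.trans ht) ht).trans_lt hYT

theorem tendsto_X (hd : 1 < d) (h : IsSolOn d X Y (Ici a)) (ha : (X a, Y a) ∈ box d) :
    Tendsto X atTop (𝓝 0) := by
  have hbox := h.mem_box hd ha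
  have hd0 : 0 < d := one_pos.trans hd
  have hd1 : 1 / d < 1 := (div_lt_one hd0).2 hd
  obtain ⟨k, hk, hkX⟩ := h.exists_pos_le_one_sub_mul_X hd hbox
  have hforce : Tendsto (fun t => (d - 1) * Y t ^ 2) atTop (𝓝 0) := by
    simpa using ((h.tendsto_Y hd ha).pow 2).const_mul (d - 1)
  refine tendsto_zero_of_deriv_le_neg_mul_add hk h.hasDerivWithinAt_X (fun s hs => ?_)
    (fun s hs => (hbox s hs).1.1.le) hforce
  obtain ⟨hx, hxd⟩ := (hbox s hs).1
  exact fieldX_le_neg_mul_add hd0.le hx.le (hxd.trans hd1).le (hkX s hs)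

end Subsystem.IsSolOn

theorem stmt_2_general {d : ℝ} (hd : 1 < d) {s₀ : ℝ} {X Y : ℝ → ℝ}
    (hsol : Subsystem.IsSolOn d X Y (Set.Ici s₀)) (h₀ : (X s₀, Y s₀) ∈ Subsystem.box d) :
    Tendsto X atTop (𝓝 0) ∧ Tendsto Y atTop (𝓝 0) :=
  ⟨hsol.tendsto_X hd h₀, hsol.tendsto_Y hd h₀⟩

/-- Trajectories starting in the region `0 < X, Y < 1/d` converge to the origin. -/
theorem stmt_2 (d : ℕ) (hd : 2 ≤ d) (s₀ : ℝ) (X Y : ℝ → ℝ)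
    (hsol : IsSubsystemSol d X Y (Set.Ici s₀))
    (hX₀ : 0 < X s₀ ∧ X s₀ < 1 / d) (hY₀ : 0 < Y s₀ ∧ Y s₀ < 1 / d) :
    Tendsto X atTop (𝓝 0) ∧ Tendsto Y atTop (𝓝 0) :=
  stmt_2_general (Nat.one_lt_cast.2 hd) hsol.isSolOn ⟨hX₀, hY₀⟩
end

section
/- Let (X, Y) be a solution of the subsystem defined on [s₀, ∞) with 0 < X(s₀) < 1/d and 0 < Y(s₀) < 1/d. Then X(s)/Y(s)² → d − 1 as s → ∞. -/
open Filter Topology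

/-!
For `max (X s₀) (Y s₀) < m < 1 / d` the open square `(0, m)²` is forward invariant, because on it
each of `X`, `m - X`, `Y`, `m - Y` decays at most exponentially. The ratio `R = X / Y²` satisfies
`R' = (d - 1) - (1 - 2X + dX²) R` with a rate of at most `1`, so for `d > 1` it is bounded below by
a positive constant; then `(Y⁻²)' = 2R(1 - dX)` is too, and `Y → 0`. Both
`X' = -(1 - dX²) X + (d - 1) Y²` and the equation for `R - (d - 1)` are linear relaxations with rate
bounded below and vanishing forcing, which gives first `X → 0` and then `R → d - 1`.
-/

open Set

section RealInduction

variable {α β : Type*} [ConditionallyCompleteLinearOrder α] [TopologicalSpace α] [OrderTopology α]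
  [TopologicalSpace β]

theorem mapsTo_Ici_of_isOpen {γ : α → β} {a : α} {V : Set β}
    (hγ : ContinuousOn γ (Ici a)) (hV : IsOpen V)
    (hstep : ∀ t ∈ Ici a, MapsTo γ (Ico a t) V → γ t ∈ V) : MapsTo γ (Ici a) V := by
  by_contra hexit
  set S := Ici a ∩ γ ⁻¹' Vᶜ
  have hS_closed : IsClosed S := hγ.preimage_isClosed_of_isClosed isClosed_Ici hV.isClosed_compl
  have hS_nonempty : S.Nonempty := by simpa [MapsTo, Set.Nonempty, S] using hexit
  have hS_bdd : BddBelow S := ⟨a, fun _ hs => hs.1⟩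
  obtain ⟨ha, hnotMem⟩ := hS_closed.csInf_mem hS_nonempty hS_bdd
  refine hnotMem (hstep _ ha fun s hs => ?_)
  by_contra hsV
  exact notMem_of_lt_csInf hs.2 hS_bdd ⟨hs.1, hsV⟩

end RealInduction

section DifferentialInequalities

theorem mul_exp_le_of_mul_le_deriv {g g' : ℝ → ℝ} {K a b : ℝ} (hab : a ≤ b)
    (hg : ∀ s ∈ Icc a b, HasDerivWithinAt g (g' s) (Icc a b) s)
    (hle : ∀ s ∈ Ico a b, K * g s ≤ g' s) : g a * Real.exp (K * (b - a)) ≤ g b := by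
  have hneg : -g b ≤ gronwallBound (-g a) K 0 (b - a) := by
    refine le_gronwallBound_of_liminf_deriv_right_le (f := fun s => -g s) (f' := fun s => -g' s)
      (fun s hs => (hg s hs).continuousWithinAt.neg) (fun s hs r hr => ?_) le_rfl
      (fun s hs => by linarith [hle s hs]) b (right_mem_Icc.2 hab)
    exact ((hg s (Ico_subset_Icc_self hs)).neg.mono_of_mem_nhdsWithin
      (Icc_mem_nhdsGE_of_mem hs)).liminf_right_slope_le hr
  rw [gronwallBound_ε0] at hneg
  linarith

theorem pos_of_mul_le_deriv {g g' : ℝ → ℝ} {K a b : ℝ} (hab : a ≤ b) (ha : 0 < g a)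
    (hg : ∀ s ∈ Icc a b, HasDerivWithinAt g (g' s) (Icc a b) s)
    (hle : ∀ s ∈ Ico a b, K * g s ≤ g' s) : 0 < g b :=
  (mul_pos ha (Real.exp_pos _)).trans_le (mul_exp_le_of_mul_le_deriv hab hg hle)

theorem tendsto_atTop_of_pos_le_deriv {f f' : ℝ → ℝ} {a c : ℝ} (hc : 0 < c)
    (hf : ∀ s ∈ Ici a, HasDerivAt f (f' s) s) (hle : ∀ s ∈ Ici a, c ≤ f' s) :
    Tendsto f atTop atTop := by
  have hlinear : ∀ t ∈ Ici a, f a + c * (t - a) ≤ f t := by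
    intro t ht
    have hint : interior (Ici a) ⊆ Ici a := interior_subset
    have := (convex_Ici a).mul_sub_le_image_sub_of_le_deriv
      (fun s hs => (hf s hs).continuousAt.continuousWithinAt)
      (fun s hs => (hf s (hint hs)).differentiableAt.differentiableWithinAt)
      (fun s hs => (hle s (hint hs)).trans_eq (hf s (hint hs)).deriv.symm)
      a self_mem_Ici t ht ht
    linarith
  refine tendsto_atTop_mono' atTop ((eventually_ge_atTop a).mono hlinear) ?_
  exact tendsto_atTop_add_const_left _ _
    ((tendsto_atTop_add_const_right _ (-a) tendsto_id).const_mul_atTop hc)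

theorem tendsto_zero_of_deriv_le_neg_mul_add {w w' e : ℝ → ℝ} {κ : ℝ} (hκ : 0 < κ)
    (hw : ∀ᶠ s in atTop, HasDerivAt w (w' s) s) (hw_nonneg : ∀ᶠ s in atTop, 0 ≤ w s)
    (hle : ∀ᶠ s in atTop, w' s ≤ -κ * w s + e s) (he : Tendsto e atTop (𝓝 0)) :
    Tendsto w atTop (𝓝 0) := by
  refine tendsto_order.2 ⟨fun r hr => hw_nonneg.mono fun s hs => hr.trans_le hs, fun ε hε => ?_⟩
  have he_small : ∀ᶠ s in atTop, e s < κ * (ε / 2) := he.eventually_lt_const (by positivity)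
  obtain ⟨T, hT⟩ := eventually_atTop.1 (hw.and (hle.and he_small))
  have hcompare : ∀ t ≥ T, (ε / 2 - w T) * Real.exp (-κ * (t - T)) ≤ ε / 2 - w t := by
    intro t ht
    refine mul_exp_le_of_mul_le_deriv (g := fun s => ε / 2 - w s) (g' := fun s => -w' s) ht
      (fun s hs => ((hT s hs.1).1.const_sub (ε / 2)).hasDerivWithinAt) (fun s hs => ?_)
    obtain ⟨-, hs_le, hs_small⟩ := hT s hs.1
    linarith
  have htransient :
      Tendsto (fun t => (ε / 2 - w T) * Real.exp (-κ * (t - T))) atTop (𝓝 0) := by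
    have hexp : Tendsto (fun t => Real.exp (-κ * (t - T))) atTop (𝓝 0) :=
      Real.tendsto_exp_atBot.comp ((tendsto_atTop_add_const_right _ (-T)
        tendsto_id).const_mul_atTop_of_neg (neg_lt_zero.2 hκ))
    simpa using hexp.const_mul (ε / 2 - w T)
  filter_upwards [eventually_ge_atTop T,
    htransient.eventually_const_lt (neg_lt_zero.2 (half_pos hε))] with t ht hsmall
  linarith [hcompare t ht]

theorem tendsto_zero_of_hasDerivAt_neg_smul_add {E : Type*} [NormedAddCommGroup E]
    [InnerProductSpace ℝ E] {u e : ℝ → E} {k : ℝ → ℝ} {κ : ℝ} (hκ : 0 < κ)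
    (hu : ∀ᶠ s in atTop, HasDerivAt u (-k s • u s + e s) s) (hk : ∀ᶠ s in atTop, κ ≤ k s)
    (he : Tendsto e atTop (𝓝 0)) : Tendsto u atTop (𝓝 0) := by
  have hforcing : Tendsto (fun s => ‖e s‖ ^ 2 / κ) atTop (𝓝 0) := by
    simpa using (he.norm.pow 2).div_const κ
  have hsq : Tendsto (fun s => ‖u s‖ ^ 2) atTop (𝓝 0) := by
    refine tendsto_zero_of_deriv_le_neg_mul_add hκ (hu.mono fun s hs => hs.norm_sq)
      (.of_forall fun s => sq_nonneg _) (hk.mono fun s hs => ?_) hforcing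
    have hyoung : 2 * inner ℝ (u s) (e s) ≤ κ * ‖u s‖ ^ 2 + ‖e s‖ ^ 2 / κ := by
      have hsquare : 0 ≤ (κ * ‖u s‖ - ‖e s‖) ^ 2 / κ := by positivity
      have hexpand : (κ * ‖u s‖ - ‖e s‖) ^ 2 / κ =
          κ * ‖u s‖ ^ 2 + ‖e s‖ ^ 2 / κ - 2 * (‖u s‖ * ‖e s‖) := by
        field_simp
        ring
      linarith [real_inner_le_norm (u s) (e s)]
    have hrate : κ * ‖u s‖ ^ 2 ≤ k s * ‖u s‖ ^ 2 := by gcongr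
    rw [inner_add_right, real_inner_smul_right, real_inner_self_eq_norm_sq]
    linarith
  rw [tendsto_zero_iff_norm_tendsto_zero]
  simpa [Real.sqrt_sq] using hsq.sqrt

end DifferentialInequalities

/-- The planar subsystem of `IsSubsystemSol`, with the dimension `d` allowed to be any real
number. -/
structure IsRealSubsystemSol (d : ℝ) (X Y : ℝ → ℝ) (I : Set ℝ) : Prop where
  hasDerivAt_fst : ∀ s ∈ I, HasDerivAt X (X s * (d * X s ^ 2 - 1) + (d - 1) * Y s ^ 2) s
  hasDerivAt_snd : ∀ s ∈ I, HasDerivAt Y (X s * Y s * (d * X s - 1)) s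

namespace IsRealSubsystemSol

variable {d m s s₀ x y : ℝ} {X Y : ℝ → ℝ} {I : Set ℝ}

theorem neg_le_field_fst (hd : 1 ≤ d) (hx : 0 < x) :
    -x ≤ x * (d * x ^ 2 - 1) + (d - 1) * y ^ 2 := by
  have hcubic : 0 ≤ d * x ^ 3 := by positivity
  have hforcing : 0 ≤ (d - 1) * y ^ 2 := mul_nonneg (sub_nonneg.2 hd) (sq_nonneg y)
  linarith

theorem field_fst_le_sub (hd : 1 ≤ d) (hm : d * m < 1) (hx : x ∈ Ioo 0 m) (hy : y ∈ Ioo 0 m) :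
    x * (d * x ^ 2 - 1) + (d - 1) * y ^ 2 ≤ m - x := by
  have hm_pos : 0 < m := hx.1.trans hx.2
  have hcubic : d * x ^ 3 ≤ d * m ^ 3 := by gcongr <;> linarith [hx.1, hx.2]
  have hforcing : (d - 1) * y ^ 2 ≤ (d - 1) * m ^ 2 := by
    gcongr <;> linarith [hy.1, hy.2]
  have hcorner : 0 ≤ m * (1 + m) * (1 - d * m) :=
    mul_nonneg (by positivity) (sub_nonneg.2 hm.le)
  linarith

theorem neg_le_field_snd (hd : 1 ≤ d) (hm : d * m < 1) (hx : x ∈ Ioo 0 m) (hy : 0 < y) :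
    -y ≤ x * y * (d * x - 1) := by
  have hx_lt_one : x < 1 :=
    calc x ≤ d * x := le_mul_of_one_le_left hx.1.le hd
      _ < d * m := by gcongr; exact hx.2
      _ < 1 := hm
  have hlinear : 0 ≤ y * (1 - x) := mul_nonneg hy.le (by linarith)
  have hquadratic : 0 ≤ d * x ^ 2 * y := by positivity
  linarith

theorem field_snd_nonpos (hd : 0 < d) (hm : d * m < 1) (hx : x ∈ Ioo 0 m) (hy : 0 < y) :
    x * y * (d * x - 1) ≤ 0 := by
  have hdx : d * x < 1 := (mul_lt_mul_of_pos_left hx.2 hd).trans hm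
  exact mul_nonpos_of_nonneg_of_nonpos (mul_pos hx.1 hy).le (by linarith)

theorem mapsTo_square (h : IsRealSubsystemSol d X Y (Ici s₀)) (hd : 1 ≤ d) (hm : d * m < 1)
    (hX₀ : X s₀ ∈ Ioo 0 m) (hY₀ : Y s₀ ∈ Ioo 0 m) :
    MapsTo (fun s => (X s, Y s)) (Ici s₀) (Ioo 0 m ×ˢ Ioo 0 m) := by
  have hcont : ContinuousOn (fun s => (X s, Y s)) (Ici s₀) := fun s hs =>
    ((h.hasDerivAt_fst s hs).continuousAt.prodMk
      (h.hasDerivAt_snd s hs).continuousAt).continuousWithinAt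
  refine mapsTo_Ici_of_isOpen hcont (isOpen_Ioo.prod isOpen_Ioo) fun t ht hbefore => ?_
  have hX : ∀ s ∈ Icc s₀ t, HasDerivWithinAt X _ (Icc s₀ t) s := fun s hs =>
    (h.hasDerivAt_fst s hs.1).hasDerivWithinAt
  have hY : ∀ s ∈ Icc s₀ t, HasDerivWithinAt Y _ (Icc s₀ t) s := fun s hs =>
    (h.hasDerivAt_snd s hs.1).hasDerivWithinAt
  refine ⟨⟨?_, sub_pos.1 ?_⟩, ?_, sub_pos.1 ?_⟩
  · refine pos_of_mul_le_deriv (K := -1) ht hX₀.1 hX fun s hs => ?_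
    linarith [neg_le_field_fst (y := Y s) hd (hbefore hs).1.1]
  · refine pos_of_mul_le_deriv (g := fun s => m - X s) (K := -1) ht (sub_pos.2 hX₀.2)
      (fun s hs => (hX s hs).const_sub m) fun s hs => ?_
    linarith [field_fst_le_sub hd hm (hbefore hs).1 (hbefore hs).2]
  · refine pos_of_mul_le_deriv (K := -1) ht hY₀.1 hY fun s hs => ?_
    linarith [neg_le_field_snd hd hm (hbefore hs).1 (hbefore hs).2.1]
  · refine pos_of_mul_le_deriv (g := fun s => m - Y s) (K := -1) ht (sub_pos.2 hY₀.2)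
      (fun s hs => (hY s hs).const_sub m) fun s hs => ?_
    linarith [field_snd_nonpos (by positivity) hm (hbefore hs).1 (hbefore hs).2.1,
      (hbefore hs).2.2]

theorem hasDerivAt_ratio (h : IsRealSubsystemSol d X Y I) (hs : s ∈ I) (hY : Y s ≠ 0) :
    HasDerivAt (fun t => X t / Y t ^ 2)
      (d - 1 - (1 - 2 * X s + d * X s ^ 2) * (X s / Y s ^ 2)) s := by
  refine ((h.hasDerivAt_fst s hs).div ((h.hasDerivAt_snd s hs).pow 2)
    (pow_ne_zero 2 hY)).congr_deriv ?_
  simp only [Pi.pow_apply]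
  field_simp
  push_cast
  ring

theorem hasDerivAt_inv_snd_sq (h : IsRealSubsystemSol d X Y I) (hs : s ∈ I) (hY : Y s ≠ 0) :
    HasDerivAt (fun t => (Y t ^ 2)⁻¹) (2 * (X s / Y s ^ 2) * (1 - d * X s)) s := by
  refine (((h.hasDerivAt_snd s hs).pow 2).inv (pow_ne_zero 2 hY)).congr_deriv ?_
  simp only [Pi.pow_apply]
  field_simp
  push_cast
  ring

section Trapped

variable (h : IsRealSubsystemSol d X Y (Ici s₀)) (hm : d * m < 1)
  (hXY : MapsTo (fun s => (X s, Y s)) (Ici s₀) (Ioo 0 m ×ˢ Ioo 0 m))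

include h hm hXY

theorem exists_pos_le_ratio (hd : 1 < d) : ∃ c > 0, ∀ s ∈ Ici s₀, c ≤ X s / Y s ^ 2 := by
  have hratio_pos : ∀ s ∈ Ici s₀, 0 < X s / Y s ^ 2 := fun s hs =>
    div_pos (hXY hs).1.1 (pow_pos (hXY hs).2.1 2)
  set c := min (X s₀ / Y s₀ ^ 2) (d - 1)
  have hc₀ : c ≤ X s₀ / Y s₀ ^ 2 := min_le_left _ _
  have hcd : c ≤ d - 1 := min_le_right _ _
  refine ⟨c, lt_min (hratio_pos s₀ self_mem_Ici) (sub_pos.2 hd), fun t ht => ?_⟩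
  have hexp : (X s₀ / Y s₀ ^ 2 - c) * Real.exp (-1 * (t - s₀)) ≤ X t / Y t ^ 2 - c := by
    refine mul_exp_le_of_mul_le_deriv (g := fun s => X s / Y s ^ 2 - c) ht (fun s hs =>
      ((h.hasDerivAt_ratio hs.1 (hXY hs.1).2.1.ne').sub_const c).hasDerivWithinAt) fun s hs => ?_
    obtain ⟨hX_pos, hX_lt⟩ := (hXY hs.1).1
    have hdX : d * X s < 1 := (mul_lt_mul_of_pos_left hX_lt (by positivity)).trans hm
    have hrate : 1 - 2 * X s + d * X s ^ 2 ≤ 1 := by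
      linarith [mul_pos hX_pos (sub_pos.2 hdX)]
    have := mul_le_of_le_one_left (hratio_pos s hs.1).le hrate
    linarith
  exact sub_nonneg.1 ((mul_nonneg (sub_nonneg.2 hc₀) (Real.exp_pos _).le).trans hexp)

theorem tendsto_snd_zero (hd : 1 < d) : Tendsto Y atTop (𝓝 0) := by
  obtain ⟨c, hc, hratio⟩ := h.exists_pos_le_ratio hm hXY hd
  have hgap : 0 < 1 - d * m := sub_pos.2 hm
  have hinv : Tendsto (fun s => (Y s ^ 2)⁻¹) atTop atTop := by
    refine tendsto_atTop_of_pos_le_deriv (c := 2 * c * (1 - d * m)) (mul_pos (by positivity) hgap)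
      (fun s hs => h.hasDerivAt_inv_snd_sq hs (hXY hs).2.1.ne') fun s hs => ?_
    have hX_lt : X s ≤ m := (hXY hs).1.2.le
    have hR := hratio s hs
    have hR_nonneg : 0 ≤ X s / Y s ^ 2 := hc.le.trans hR
    gcongr
  have hsq : Tendsto (fun s => Y s ^ 2) atTop (𝓝 0) :=
    hinv.inv_tendsto_atTop.congr fun s => inv_inv (Y s ^ 2)
  rw [tendsto_zero_iff_abs_tendsto_zero]
  simpa [Function.comp_def, Real.sqrt_sq_eq_abs] using hsq.sqrt

theorem tendsto_fst_zero (hd : 1 ≤ d) : Tendsto X atTop (𝓝 0) := by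
  have hforcing : Tendsto (fun s => (d - 1) * Y s ^ 2) atTop (𝓝 0) := by
    rcases hd.eq_or_lt with rfl | hd
    · simp
    · simpa using ((h.tendsto_snd_zero hm hXY hd).pow 2).const_mul (d - 1)
  have hm_pos : 0 < m := (hXY self_mem_Ici).1.1.trans (hXY self_mem_Ici).1.2
  have hm_lt_one : m < 1 := (le_mul_of_one_le_left hm_pos.le hd).trans_lt hm
  refine tendsto_zero_of_hasDerivAt_neg_smul_add (k := fun s => 1 - d * X s ^ 2)
    (sub_pos.2 hm_lt_one) ?_ ?_ hforcing
  · filter_upwards [eventually_ge_atTop s₀] with s hs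
    refine (h.hasDerivAt_fst s hs).congr_deriv ?_
    simp only [smul_eq_mul]
    ring
  · filter_upwards [eventually_ge_atTop s₀] with s hs
    obtain ⟨hX_pos, hX_lt⟩ := (hXY hs).1
    have hdX_sq : d * X s ^ 2 ≤ m :=
      calc d * X s ^ 2 = d * X s * X s := by ring
        _ ≤ d * m * m := by gcongr
        _ ≤ m := mul_le_of_le_one_left hm_pos.le hm.le
    linarith

theorem tendsto_ratio (hd : 1 ≤ d) : Tendsto (fun s => X s / Y s ^ 2) atTop (𝓝 (d - 1)) := by
  have hX := h.tendsto_fst_zero hm hXY hd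
  have hrate : Tendsto (fun s => 1 - 2 * X s + d * X s ^ 2) atTop (𝓝 1) := by
    simpa using ((hX.const_mul 2).const_sub 1).add ((hX.pow 2).const_mul d)
  have hforcing : Tendsto (fun s => (d - 1) * (1 - (1 - 2 * X s + d * X s ^ 2))) atTop (𝓝 0) := by
    simpa using (hrate.const_sub 1).const_mul (d - 1)
  refine tendsto_sub_nhds_zero_iff.1 (tendsto_zero_of_hasDerivAt_neg_smul_add one_half_pos ?_
    (hrate.eventually_const_le one_half_lt_one) hforcing)
  filter_upwards [eventually_ge_atTop s₀] with s hs
  refine ((h.hasDerivAt_ratio hs (hXY hs).2.1.ne').sub_const (d - 1)).congr_deriv ?_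
  simp only [smul_eq_mul]
  ring

end Trapped

end IsRealSubsystemSol

theorem stmt_3_general {d s₀ : ℝ} {X Y : ℝ → ℝ} (hd : 1 ≤ d)
    (hsol : IsRealSubsystemSol d X Y (Ici s₀))
    (hX₀ : X s₀ ∈ Ioo 0 (1 / d)) (hY₀ : Y s₀ ∈ Ioo 0 (1 / d)) :
    Tendsto (fun s => X s / Y s ^ 2) atTop (𝓝 (d - 1)) := by
  obtain ⟨m, hm_gt, hm_lt⟩ := exists_between (max_lt hX₀.2 hY₀.2)
  obtain ⟨hX_lt, hY_lt⟩ := max_lt_iff.1 hm_gt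
  have hdm : d * m < 1 := (lt_div_iff₀' (by positivity)).1 hm_lt
  exact hsol.tendsto_ratio hdm (hsol.mapsTo_square hd hdm ⟨hX₀.1, hX_lt⟩ ⟨hY₀.1, hY_lt⟩) hd

/-- Along trajectories in the region `0 < X, Y < 1/d`, `X/Y² → d − 1`. -/
theorem stmt_3 (d : ℕ) (hd : 2 ≤ d) (s₀ : ℝ) (X Y : ℝ → ℝ)
    (hsol : IsSubsystemSol d X Y (Set.Ici s₀))
    (hX₀ : 0 < X s₀ ∧ X s₀ < 1 / d) (hY₀ : 0 < Y s₀ ∧ Y s₀ < 1 / d) :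
    Tendsto (fun s => X s / Y s ^ 2) atTop (𝓝 ((d : ℝ) - 1)) :=
  stmt_3_general (Nat.one_le_cast.2 (one_le_two.trans hd)) ⟨hsol.1, hsol.2⟩ hX₀ hY₀
end

section
/- Let (X, Y) be a solution of the subsystem defined on [s₀, ∞) with 0 < X(s₀) < 1/d and 0 < Y(s₀) < 1/d. Then (1/X(s))·(X(s)/Y(s)² − (d−1)) → 2(d−1) as s → ∞. -/
open Filter Topology

/-!
The region `{w y² ≤ x ≤ M, 0 < y ≤ M}` is forward invariant whenever `0 < w ≤ d - 1` and `d M < 1`,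
since the vector field points strictly inwards along its boundary; a suitable choice of `w` and `M`
puts the initial point into it. Inside, `(1 / Y²)' = 2 X (1 - d X) / Y² ≥ 2 w (1 - d M) > 0`, so
`Y → 0`, and then `X → 0` because `X' = -(1 - d X²) X + (d - 1) Y²`. The ratio `W = X / Y²`
satisfies `W' = -(1 - 2 X + d X²) W + (d - 1)`, hence `W → d - 1`. Finally the quantity
`Q = (W - (d - 1)) / X` solves the linear equation
`Q' = -((d - 1) / W) Q + 2 W (1 - d X) + (d - 1) d X`, whose coefficient tends to `1` and whose
forcing term tends to `2 (d - 1)`.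
-/

open Set

theorem eventually_nhdsGT_le_of_deriv_neg {f : ℝ → ℝ} {f' c x : ℝ}
    (hf : HasDerivWithinAt f f' (Ici x) x) (hle : f x ≤ c) (hneg : f x = c → f' < 0) :
    ∀ᶠ z in 𝓝[>] x, f z ≤ c := by
  rcases hle.lt_or_eq with hlt | heq
  · have hcont : Tendsto f (𝓝[>] x) (𝓝 (f x)) :=
      hf.continuousWithinAt.mono Ioi_subset_Ici_self
    exact (hcont.eventually_lt_const hlt).mono fun z hz => hz.le
  · filter_upwards [hf.Ioi_of_Ici.limsup_slope_le' (lt_irrefl x) (hneg heq),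
      self_mem_nhdsWithin] with z hslope hz
    exact heq ▸ ((slope_neg_iff_of_le (le_of_lt hz)).1 hslope).le

theorem forall_image_le_of_deriv_neg_boundary {ι : Type*} [Finite ι] {f f' : ι → ℝ → ℝ}
    {c : ι → ℝ} {a b : ℝ} (hf : ∀ i, ContinuousOn (f i) (Icc a b))
    (hf' : ∀ i, ∀ x ∈ Ico a b, HasDerivWithinAt (f i) (f' i x) (Ici x) x)
    (ha : ∀ i, f i a ≤ c i)
    (bound : ∀ x ∈ Ico a b, (∀ j, f j x ≤ c j) → ∀ i, f i x = c i → f' i x < 0) :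
    ∀ x ∈ Icc a b, ∀ i, f i x ≤ c i := by
  have hclosed : IsClosed ({x | ∀ i, f i x ≤ c i} ∩ Icc a b) := by
    have hcont : ContinuousOn (fun x i => f i x) (Icc a b) := continuousOn_pi.2 hf
    rw [inter_comm]
    exact hcont.preimage_isClosed_of_isClosed isClosed_Icc (isClosed_Iic (a := c))
  refine hclosed.Icc_subset_of_forall_mem_nhdsWithin ha fun x hx => ?_
  exact eventually_all.2 fun i =>
    eventually_nhdsGT_le_of_deriv_neg (hf' i x hx.2) (hx.1 i) (bound x hx.2 hx.1 i)

theorem pos_of_neg_mul_le_deriv {f f' : ℝ → ℝ} {c a : ℝ}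
    (hf : ∀ x ∈ Ici a, HasDerivAt f (f' x) x) (ha : 0 < f a)
    (bound : ∀ x ∈ Ici a, 0 < f x → -c * f x ≤ f' x) : ∀ x ∈ Ici a, 0 < f x := by
  intro b hb
  let B : ℝ → ℝ := fun x => f a * Real.exp (-(c + 1) * (x - a))
  have hBpos : ∀ x, 0 < B x := fun x => mul_pos ha (Real.exp_pos _)
  have hB : ∀ x, HasDerivAt B (-(c + 1) * B x) x := fun x =>
    ((((hasDerivAt_id x).sub_const a).const_mul (-(c + 1))).exp.const_mul (f a)).congr_deriv
      (by simp only [B, id]; ring)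
  have hfence : -f b ≤ -B b := by
    refine image_le_of_deriv_right_lt_deriv_boundary (f := fun x => -f x) (B := fun x => -B x)
      (fun x hx => (hf x hx.1).neg.continuousAt.continuousWithinAt)
      (fun x hx => (hf x hx.1).neg.hasDerivWithinAt) (by simp [B]) (fun x => (hB x).neg)
      (fun x hx heq => ?_) (right_mem_Icc.2 hb)
    have hfB : f x = B x := neg_injective heq
    have hfx : 0 < f x := hfB ▸ hBpos x
    linarith [bound x hx.1 hfx, congrArg (fun y => (c + 1) * y) hfB]
  linarith [hBpos b]

theorem tendsto_atTop_of_le_deriv {f f' : ℝ → ℝ} {k a : ℝ} (hk : 0 < k)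
    (hf : ∀ x ∈ Ici a, HasDerivAt f (f' x) x) (bound : ∀ x ∈ Ici a, k ≤ f' x) :
    Tendsto f atTop atTop := by
  have hgrowth : ∀ x ∈ Ici a, k * (x - a) ≤ f x - f a := fun x hx =>
    (convex_Ici a).mul_sub_le_image_sub_of_le_deriv (HasDerivAt.continuousOn hf)
      (fun y hy => (hf y (interior_subset hy)).differentiableAt.differentiableWithinAt)
      (fun y hy => (hf y (interior_subset hy)).deriv ▸ bound y (interior_subset hy))
      a self_mem_Ici x hx hx
  have hlinear : Tendsto (fun x => k * (x - a) + f a) atTop atTop :=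
    tendsto_atTop_add_const_right _ _
      ((tendsto_atTop_add_const_right _ (-a) tendsto_id).const_mul_atTop hk)
  refine tendsto_atTop_mono' _ ?_ hlinear
  filter_upwards [eventually_ge_atTop a] with x hx
  linarith [hgrowth x hx]

theorem tendsto_gronwallBound_atTop {K : ℝ} (hK : K < 0) (δ ε : ℝ) :
    Tendsto (gronwallBound δ K ε) atTop (𝓝 (-(ε / K))) := by
  have hexp : Tendsto (fun x => Real.exp (K * x)) atTop (𝓝 0) :=
    Real.tendsto_exp_atBot.comp (tendsto_id.const_mul_atTop_of_neg hK)
  rw [gronwallBound_of_K_ne_0 hK.ne]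
  simpa using (hexp.const_mul δ).add ((hexp.sub_const 1).const_mul (ε / K))

theorem tendsto_zero_of_deriv_le_neg_mul_add_s4 {f f' g : ℝ → ℝ} {c : ℝ} (hc : 0 < c)
    (hf_nonneg : ∀ᶠ x in atTop, 0 ≤ f x) (hf : ∀ᶠ x in atTop, HasDerivAt f (f' x) x)
    (bound : ∀ᶠ x in atTop, f' x ≤ -c * f x + g x) (hg : Tendsto g atTop (𝓝 0)) :
    Tendsto f atTop (𝓝 0) := by
  refine tendsto_order.2 ⟨fun ε hε => hf_nonneg.mono fun x hx => hε.trans_le hx, fun ε hε => ?_⟩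
  have hg_small : ∀ᶠ x in atTop, g x < c * (ε / 2) := hg.eventually_lt_const (by positivity)
  obtain ⟨S, hS⟩ := eventually_atTop.1 (hf.and (bound.and hg_small))
  have hgronwall : ∀ x ∈ Ici S, f x ≤ gronwallBound (f S) (-c) (c * (ε / 2)) (x - S) := fun x hx =>
    le_gronwallBound_of_liminf_deriv_right_le
      (fun y hy => (hS y hy.1).1.continuousAt.continuousWithinAt)
      (fun y hy r hr => (hS y hy.1).1.hasDerivWithinAt.liminf_right_slope_le hr) le_rfl
      (fun y hy => by linarith [(hS y hy.1).2.1, (hS y hy.1).2.2]) x (right_mem_Icc.2 hx)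
  have hlimit : -(c * (ε / 2) / -c) < ε := by
    rw [div_neg, neg_neg, mul_div_cancel_left₀ _ hc.ne']
    exact half_lt_self hε
  have hbound_small := ((tendsto_gronwallBound_atTop (neg_neg_of_pos hc) (f S) (c * (ε / 2))).comp
    (tendsto_atTop_add_const_right _ (-S) tendsto_id)).eventually_lt_const hlimit
  filter_upwards [hbound_small, eventually_ge_atTop S] with x hx hSx
  exact (hgronwall x hSx).trans_lt hx

theorem tendsto_zero_of_hasDerivAt_neg_mul_add {u p h : ℝ → ℝ} {c : ℝ} (hc : 0 < c)
    (hu : ∀ᶠ x in atTop, HasDerivAt u (-p x * u x + h x) x)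
    (hp : ∀ᶠ x in atTop, c ≤ p x) (hh : Tendsto h atTop (𝓝 0)) :
    Tendsto u atTop (𝓝 0) := by
  have hsq : Tendsto (fun x => u x ^ 2) atTop (𝓝 0) := by
    refine tendsto_zero_of_deriv_le_neg_mul_add_s4 (g := fun x => h x ^ 2 / c) hc
      (.of_forall fun x => sq_nonneg (u x)) (hu.mono fun x hx => hx.fun_pow 2) ?_
      (by simpa using (hh.pow 2).div_const c)
    filter_upwards [hp] with x hx
    have young : 2 * u x * h x ≤ c * u x ^ 2 + h x ^ 2 / c := by
      have hsquare : c * u x ^ 2 + h x ^ 2 / c - 2 * u x * h x = (c * u x - h x) ^ 2 / c := by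
        field_simp
        ring
      linarith [div_nonneg (sq_nonneg (c * u x - h x)) hc.le]
    have hdamping : c * u x ^ 2 ≤ p x * u x ^ 2 := by gcongr
    calc ((2 : ℕ) : ℝ) * u x ^ (2 - 1) * (-p x * u x + h x)
        = -2 * (p x * u x ^ 2) + 2 * u x * h x := by ring
      _ ≤ -c * u x ^ 2 + h x ^ 2 / c := by linarith
  refine (tendsto_zero_iff_abs_tendsto_zero _).2 ?_
  simpa [Function.comp_def, Real.sqrt_sq_eq_abs] using hsq.sqrt

theorem tendsto_div_of_hasDerivAt_neg_mul_add {u p h : ℝ → ℝ} {p₀ h₀ : ℝ} (hp₀ : 0 < p₀)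
    (hu : ∀ᶠ x in atTop, HasDerivAt u (-p x * u x + h x) x)
    (hp : Tendsto p atTop (𝓝 p₀)) (hh : Tendsto h atTop (𝓝 h₀)) :
    Tendsto u atTop (𝓝 (h₀ / p₀)) := by
  refine tendsto_sub_nhds_zero_iff.1 ?_
  refine tendsto_zero_of_hasDerivAt_neg_mul_add (p := p) (h := fun x => h x - p x * (h₀ / p₀))
    (half_pos hp₀) (hu.mono fun x hx => (hx.sub_const _).congr_deriv (by ring))
    ((hp.eventually_const_lt (half_lt_self hp₀)).mono fun x hx => hx.le) ?_
  simpa [mul_div_cancel₀ h₀ hp₀.ne'] using hh.sub (hp.mul_const (h₀ / p₀))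

/-- `(X, Y)` solves the planar subsystem on `I` for a real parameter `d`; for natural `d` this is
`IsSubsystemSol`. -/
structure SubsystemSolution (d : ℝ) (X Y : ℝ → ℝ) (I : Set ℝ) : Prop where
  hasDerivAt_fst : ∀ s ∈ I, HasDerivAt X (X s * (d * X s ^ 2 - 1) + (d - 1) * Y s ^ 2) s
  hasDerivAt_snd : ∀ s ∈ I, HasDerivAt Y (X s * Y s * (d * X s - 1)) s

/-- The curvilinear region `w y² ≤ x ≤ M`, `0 < y ≤ M` of the phase plane, in which trajectories of
the subsystem are trapped when `0 < w ≤ d - 1` and `d M < 1`. -/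
def trappingRegion (w M : ℝ) : Set (ℝ × ℝ) :=
  {z | 0 < z.2 ∧ z.1 ≤ M ∧ z.2 ≤ M ∧ w * z.2 ^ 2 ≤ z.1}

theorem fst_pos_of_mem_trappingRegion {w M x y : ℝ} (hw : 0 < w)
    (h : (x, y) ∈ trappingRegion w M) : 0 < x :=
  (mul_pos hw (pow_pos h.1 2)).trans_le h.2.2.2

theorem fst_velocity_neg_of_snd_le_fst {d x y : ℝ} (hd : 1 ≤ d) (hx : 0 < x) (hdx : d * x < 1)
    (hy : 0 < y) (hyx : y ≤ x) : x * (d * x ^ 2 - 1) + (d - 1) * y ^ 2 < 0 := by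
  calc x * (d * x ^ 2 - 1) + (d - 1) * y ^ 2
      ≤ x * (d * x ^ 2 - 1) + (d - 1) * x ^ 2 := by
        have : 0 ≤ d - 1 := sub_nonneg.2 hd
        gcongr
    _ = x * (x + 1) * (d * x - 1) := by ring
    _ < 0 := mul_neg_of_pos_of_neg (mul_pos hx (by linarith)) (sub_neg.2 hdx)

-- The left-hand side is the derivative of `w Y² - X` along the flow.
theorem lower_velocity_neg_of_mul_sq_eq {d w x y : ℝ} (hw : w ≤ d - 1) (hx : 0 < x)
    (hdx : d * x < 1) (hxy : w * y ^ 2 = x) :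
    w * (2 * y * (x * y * (d * x - 1))) - (x * (d * x ^ 2 - 1) + (d - 1) * y ^ 2) < 0 := by
  have hforcing : x ≤ (d - 1) * y ^ 2 := hxy ▸ by gcongr
  calc w * (2 * y * (x * y * (d * x - 1))) - (x * (d * x ^ 2 - 1) + (d - 1) * y ^ 2)
      = 2 * (w * y ^ 2) * x * (d * x - 1) - x * (d * x ^ 2 - 1) - (d - 1) * y ^ 2 := by ring
    _ ≤ 2 * x * x * (d * x - 1) - x * (d * x ^ 2 - 1) - x := by rw [hxy]; linarith
    _ = x ^ 2 * (d * x - 2) := by ring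
    _ < 0 := mul_neg_of_pos_of_neg (pow_pos hx 2) (by linarith)

theorem velocity_inward_of_mem_trappingRegion {d w M x y : ℝ} (hw : 0 < w) (hwd : w ≤ d - 1)
    (hM : d * M < 1) (h : (x, y) ∈ trappingRegion w M) :
    (x = M → x * (d * x ^ 2 - 1) + (d - 1) * y ^ 2 < 0) ∧
    x * y * (d * x - 1) < 0 ∧
    (w * y ^ 2 = x →
      w * (2 * y * (x * y * (d * x - 1))) - (x * (d * x ^ 2 - 1) + (d - 1) * y ^ 2) < 0) := by
  have hx : 0 < x := fst_pos_of_mem_trappingRegion hw h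
  obtain ⟨hy, hxM, hyM, -⟩ := h
  have hd : 1 ≤ d := by linarith
  have hdx : d * x < 1 := (mul_le_mul_of_nonneg_left hxM (by linarith)).trans_lt hM
  exact ⟨fun hxeq => fst_velocity_neg_of_snd_le_fst hd hx hdx hy (hyM.trans_eq hxeq.symm),
    mul_neg_of_pos_of_neg (mul_pos hx hy) (sub_neg.2 hdx),
    lower_velocity_neg_of_mul_sq_eq hwd hx hdx⟩

theorem exists_mem_trappingRegion {d x y : ℝ} (hd : 1 < d) (hx : 0 < x) (hxd : d * x < 1)
    (hy : 0 < y) (hyd : d * y < 1) :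
    ∃ w M, 0 < w ∧ w ≤ d - 1 ∧ d * M < 1 ∧ (x, y) ∈ trappingRegion w M := by
  refine ⟨min (d - 1) (x / y ^ 2), max x y, lt_min (sub_pos.2 hd) (by positivity), min_le_left _ _,
    ?_, hy, le_max_left x y, le_max_right x y, ?_⟩
  · rcases max_choice x y with h | h <;> rwa [h]
  · exact (le_div_iff₀ (by positivity)).1 (min_le_right _ _)

namespace SubsystemSolution

variable {d s₀ w M : ℝ} {X Y : ℝ → ℝ} {I : Set ℝ}

theorem snd_pos (hsol : SubsystemSolution d X Y (Ici s₀)) (hd : 1 ≤ d) (hY₀ : 0 < Y s₀) :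
    ∀ s ∈ Ici s₀, 0 < Y s := by
  refine pos_of_neg_mul_le_deriv (c := 1) hsol.hasDerivAt_snd hY₀ fun s _ hY => ?_
  have hrate : 0 ≤ d * X s ^ 2 - X s + 1 := by nlinarith [sq_nonneg (X s), sq_nonneg (X s - 1)]
  linarith [mul_nonneg hrate hY.le]

theorem mem_trappingRegion (hsol : SubsystemSolution d X Y (Ici s₀)) (hw : 0 < w)
    (hwd : w ≤ d - 1) (hM : d * M < 1) (h₀ : (X s₀, Y s₀) ∈ trappingRegion w M) :
    ∀ s ∈ Ici s₀, (X s, Y s) ∈ trappingRegion w M := by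
  intro s hs
  have hYpos := hsol.snd_pos (by linarith) h₀.1
  let f : Fin 3 → ℝ → ℝ := ![X, Y, fun t => w * Y t ^ 2 - X t]
  let f' : Fin 3 → ℝ → ℝ :=
    ![fun t => X t * (d * X t ^ 2 - 1) + (d - 1) * Y t ^ 2,
      fun t => X t * Y t * (d * X t - 1),
      fun t => w * (2 * Y t * (X t * Y t * (d * X t - 1)))
        - (X t * (d * X t ^ 2 - 1) + (d - 1) * Y t ^ 2)]
  have hderiv : ∀ i, ∀ t ∈ Ici s₀, HasDerivAt (f i) (f' i t) t := by
    intro i t ht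
    have hX := hsol.hasDerivAt_fst t ht
    have hY := hsol.hasDerivAt_snd t ht
    fin_cases i
    · exact hX
    · exact hY
    · exact (((hY.fun_pow 2).const_mul w).sub hX).congr_deriv (by simp [f'])
  have hinward : ∀ t ∈ Ici s₀, (∀ j, f j t ≤ ![M, M, 0] j) →
      ∀ i, f i t = ![M, M, 0] i → f' i t < 0 := by
    intro t ht hle i hi
    obtain ⟨hright, htop, hlower⟩ := velocity_inward_of_mem_trappingRegion hw hwd hM
      (⟨hYpos t ht, hle 0, hle 1, sub_nonpos.1 (hle 2)⟩ : (X t, Y t) ∈ trappingRegion w M)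
    fin_cases i
    · exact hright hi
    · exact htop
    · exact hlower (sub_eq_zero.1 hi)
  have htrap := forall_image_le_of_deriv_neg_boundary
    (fun i t ht => (hderiv i t ht.1).continuousAt.continuousWithinAt)
    (fun i t ht => (hderiv i t ht.1).hasDerivWithinAt)
    (by simpa [f, Fin.forall_fin_succ] using h₀.2)
    (fun t ht => hinward t ht.1) s (right_mem_Icc.2 hs)
  exact ⟨hYpos s hs, htrap 0, htrap 1, sub_nonpos.1 (htrap 2)⟩

theorem hasDerivAt_inv_snd_sq (hsol : SubsystemSolution d X Y I) {s : ℝ} (hs : s ∈ I)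
    (hY : Y s ≠ 0) :
    HasDerivAt (fun t => (Y t ^ 2)⁻¹) (2 * (X s / Y s ^ 2) * (1 - d * X s)) s := by
  refine ((hsol.hasDerivAt_snd s hs).fun_pow 2).fun_inv (pow_ne_zero 2 hY) |>.congr_deriv ?_
  field_simp
  ring

theorem hasDerivAt_ratio (hsol : SubsystemSolution d X Y I) {s : ℝ} (hs : s ∈ I) (hY : Y s ≠ 0) :
    HasDerivAt (fun t => X t / Y t ^ 2)
      (-(1 - 2 * X s + d * X s ^ 2) * (X s / Y s ^ 2) + (d - 1)) s := by
  refine (hsol.hasDerivAt_fst s hs).fun_div ((hsol.hasDerivAt_snd s hs).fun_pow 2)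
    (pow_ne_zero 2 hY) |>.congr_deriv ?_
  field_simp
  ring

theorem hasDerivAt_scaled_ratio_defect (hsol : SubsystemSolution d X Y I) {s : ℝ} (hs : s ∈ I)
    (hX : X s ≠ 0) (hY : Y s ≠ 0) :
    HasDerivAt (fun t => (1 / X t) * (X t / Y t ^ 2 - (d - 1)))
      (-((d - 1) / (X s / Y s ^ 2)) * ((1 / X s) * (X s / Y s ^ 2 - (d - 1)))
        + (2 * (X s / Y s ^ 2) * (1 - d * X s) + (d - 1) * (d * X s))) s := by
  have hX' := hsol.hasDerivAt_fst s hs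
  refine ((hasDerivAt_const s 1).fun_div hX' hX).fun_mul
    ((hsol.hasDerivAt_ratio hs hY).sub_const (d - 1)) |>.congr_deriv ?_
  field_simp
  ring

theorem tendsto_snd_sq (hsol : SubsystemSolution d X Y (Ici s₀)) (hd : 0 ≤ d) (hw : 0 < w)
    (hM : d * M < 1) (htrap : ∀ s ∈ Ici s₀, (X s, Y s) ∈ trappingRegion w M) :
    Tendsto (fun s => Y s ^ 2) atTop (𝓝 0) := by
  have hinv : Tendsto (fun s => (Y s ^ 2)⁻¹) atTop atTop := by
    refine tendsto_atTop_of_le_deriv (k := 2 * w * (1 - d * M))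
      (mul_pos (mul_pos two_pos hw) (sub_pos.2 hM))
      (fun s hs => hsol.hasDerivAt_inv_snd_sq hs (htrap s hs).1.ne') fun s hs => ?_
    obtain ⟨hY, hXM, -, hlow⟩ := htrap s hs
    have hratio : w ≤ X s / Y s ^ 2 := (le_div_iff₀ (pow_pos hY 2)).2 hlow
    gcongr
    linarith
  simpa [Function.comp_def] using tendsto_inv_atTop_zero.comp hinv

theorem tendsto_fst (hsol : SubsystemSolution d X Y (Ici s₀)) (hd : 1 ≤ d) (hw : 0 < w)
    (hM : d * M < 1) (htrap : ∀ s ∈ Ici s₀, (X s, Y s) ∈ trappingRegion w M) :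
    Tendsto X atTop (𝓝 0) := by
  have hM_pos : 0 < M :=
    (htrap s₀ self_mem_Ici).1.trans_le (htrap s₀ self_mem_Ici).2.2.1
  have hM_lt : M < 1 := (le_mul_of_one_le_left hM_pos.le hd).trans_lt hM
  refine tendsto_zero_of_hasDerivAt_neg_mul_add (p := fun s => 1 - d * X s ^ 2)
    (h := fun s => (d - 1) * Y s ^ 2) (sub_pos.2 hM_lt) ?_ ?_ ?_
  · filter_upwards [eventually_ge_atTop s₀] with s hs
    exact (hsol.hasDerivAt_fst s hs).congr_deriv (by ring)
  · filter_upwards [eventually_ge_atTop s₀] with s hs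
    have hX : 0 < X s := fst_pos_of_mem_trappingRegion hw (htrap s hs)
    have hXM : X s ≤ M := (htrap s hs).2.1
    have hdX : d * X s ≤ 1 := le_trans (by gcongr) hM.le
    linarith [mul_le_of_le_one_left hX.le hdX]
  · simpa using (hsol.tendsto_snd_sq (by linarith) hw hM htrap).const_mul (d - 1)

theorem tendsto_ratio (hsol : SubsystemSolution d X Y (Ici s₀)) (hY_ne : ∀ s ∈ Ici s₀, Y s ≠ 0)
    (hX : Tendsto X atTop (𝓝 0)) : Tendsto (fun s => X s / Y s ^ 2) atTop (𝓝 (d - 1)) := by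
  have hcoeff : Tendsto (fun s => 1 - 2 * X s + d * X s ^ 2) atTop (𝓝 1) := by
    simpa using ((hX.const_mul 2).const_sub 1).add ((hX.pow 2).const_mul d)
  simpa using tendsto_div_of_hasDerivAt_neg_mul_add one_pos
    ((eventually_ge_atTop s₀).mono fun s hs => hsol.hasDerivAt_ratio hs (hY_ne s hs))
    hcoeff tendsto_const_nhds

theorem tendsto_scaled_ratio_defect (hsol : SubsystemSolution d X Y (Ici s₀)) (hd : d ≠ 1)
    (hX_ne : ∀ s ∈ Ici s₀, X s ≠ 0) (hY_ne : ∀ s ∈ Ici s₀, Y s ≠ 0) (hX : Tendsto X atTop (𝓝 0)) :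
    Tendsto (fun s => (1 / X s) * (X s / Y s ^ 2 - (d - 1))) atTop (𝓝 (2 * (d - 1))) := by
  have hW := hsol.tendsto_ratio hY_ne hX
  have hcoeff : Tendsto (fun s => (d - 1) / (X s / Y s ^ 2)) atTop (𝓝 1) := by
    have hd' : d - 1 ≠ 0 := sub_ne_zero.2 hd
    simpa [Pi.div_def, div_self hd'] using (tendsto_const_nhds (x := d - 1)).div hW hd'
  have hforcing : Tendsto (fun s => 2 * (X s / Y s ^ 2) * (1 - d * X s) + (d - 1) * (d * X s))
      atTop (𝓝 (2 * (d - 1))) := by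
    simpa using ((hW.const_mul 2).mul ((hX.const_mul d).const_sub 1)).add
      ((hX.const_mul d).const_mul (d - 1))
  simpa using tendsto_div_of_hasDerivAt_neg_mul_add one_pos
    ((eventually_ge_atTop s₀).mono fun s hs => hsol.hasDerivAt_scaled_ratio_defect hs
      (hX_ne s hs) (hY_ne s hs))
    hcoeff hforcing

end SubsystemSolution

theorem stmt_4_general {d s₀ : ℝ} (hd : 1 < d) {X Y : ℝ → ℝ}
    (hsol : SubsystemSolution d X Y (Ici s₀))
    (hX₀ : 0 < X s₀ ∧ X s₀ < 1 / d) (hY₀ : 0 < Y s₀ ∧ Y s₀ < 1 / d) :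
    Tendsto (fun s => (1 / X s) * (X s / Y s ^ 2 - (d - 1))) atTop (𝓝 (2 * (d - 1))) := by
  have hd_pos : 0 < d := one_pos.trans hd
  obtain ⟨w, M, hw, hwd, hM, h₀⟩ := exists_mem_trappingRegion hd
    hX₀.1 ((lt_div_iff₀' hd_pos).1 hX₀.2) hY₀.1 ((lt_div_iff₀' hd_pos).1 hY₀.2)
  have htrap := hsol.mem_trappingRegion hw hwd hM h₀
  exact hsol.tendsto_scaled_ratio_defect hd.ne'
    (fun s hs => (fst_pos_of_mem_trappingRegion hw (htrap s hs)).ne')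
    (fun s hs => (htrap s hs).1.ne') (hsol.tendsto_fst hd.le hw hM htrap)

/-- Along trajectories in the region `0 < X, Y < 1/d`,
`(1/X)(X/Y² − (d−1)) → 2(d−1)`. -/
theorem stmt_4 (d : ℕ) (hd : 2 ≤ d) (s₀ : ℝ) (X Y : ℝ → ℝ)
    (hsol : IsSubsystemSol d X Y (Set.Ici s₀))
    (hX₀ : 0 < X s₀ ∧ X s₀ < 1 / d) (hY₀ : 0 < Y s₀ ∧ Y s₀ < 1 / d) :
    Tendsto (fun s => (1 / X s) * (X s / Y s ^ 2 - ((d : ℝ) - 1))) atTop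
      (𝓝 (2 * ((d : ℝ) - 1))) :=
  stmt_4_general (by exact_mod_cast hd) ⟨hsol.1, hsol.2⟩ hX₀ hY₀
end

section
/- Let (X, Y) be a solution of the subsystem defined on [s₀, ∞) with 0 < X(s₀) < 1/d and 0 < Y(s₀) < 1/d. Then (1/Y(s)²)·(X(s)/Y(s)² − (d−1)) → 2(d−1)² as s → ∞. -/
open Filter Topology

/-!
The solution cannot leave the box `(0, 1/d)²`, and `X ≤ M < 1/d` along it: as long as `X < 1/d` the
function `Y` decreases, which forces `X ≤ max (X s₀) (d * Y s₀ ^ 2) < 1/d`.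

The quotients `P = X / Y²` and `Q = (P - (d - 1)) / Y²` satisfy
`P' = -(1 - 2 X + d X²) P + (d - 1)` and `Q' = -(1 - 2 X (1 - d X)) Q + P² (2 - d X)`.
Inside the box `P' ≥ -P + (d - 1)`, so `P` is bounded below by a positive constant, and
`(1 / Y²)' = 2 P (1 - d X)` makes `1 / Y²` grow at least linearly. Hence `Y → 0` and then `X → 0`.
Now both equations have the form `u' = -k u + f` with `k → 1` and `f` convergent, so `u` has the
same limit as `f`: first `P → d - 1`, then `Q → 2 (d - 1)²`.
-/

open Set

section Comparison

/-- The base case `f a < c` is the instance `t = a` of `hstep`, for which `Ico a t` is empty. -/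
theorem lt_of_forall_Ico_lt {α β : Type*} [ConditionallyCompleteLinearOrder α]
    [TopologicalSpace α] [OrderTopology α] [LinearOrder β] [TopologicalSpace β]
    [OrderClosedTopology β] {f : α → β} {a : α} {c : β} (hf : ContinuousOn f (Ici a))
    (hstep : ∀ t, a ≤ t → (∀ s ∈ Ico a t, f s < c) → f t < c) :
    ∀ t, a ≤ t → f t < c := by
  by_contra! ⟨t, hat, hct⟩
  have hclosed : IsClosed (Icc a t ∩ f ⁻¹' Ici c) :=
    (hf.mono Icc_subset_Ici_self).preimage_isClosed_of_isClosed isClosed_Icc isClosed_Ici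
  obtain ⟨r, ⟨⟨har, hrt⟩, hcr⟩, hr_least⟩ :=
    (isCompact_Icc.of_isClosed_subset hclosed inter_subset_left).exists_isLeast
      ⟨t, right_mem_Icc.2 hat, hct⟩
  refine (hstep r har fun s hs => ?_).not_ge hcr
  by_contra! hcs
  exact (hr_least ⟨⟨hs.1, hs.2.le.trans hrt⟩, hcs⟩).not_gt hs.2

variable {u u' : ℝ → ℝ} {a b k m : ℝ}

theorem sub_le_exp_mul_sub_of_deriv_le (hab : a ≤ b)
    (hu : ∀ s ∈ Icc a b, HasDerivAt u (u' s) s) (hle : ∀ s ∈ Ico a b, u' s ≤ -k * (u s - m)) :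
    u b - m ≤ Real.exp (-k * (b - a)) * (u a - m) := by
  have hgronwall := le_gronwallBound_of_liminf_deriv_right_le (f := fun s => u s - m) (ε := 0)
    (fun s hs => ((hu s hs).sub_const m).continuousAt.continuousWithinAt)
    (fun s hs _ hr => ((hu s (Ico_subset_Icc_self hs)).sub_const
      m).hasDerivWithinAt.liminf_right_slope_le hr)
    le_rfl (fun s hs => (hle s hs).trans_eq (add_zero _).symm) b (right_mem_Icc.2 hab)
  rwa [gronwallBound_ε0, mul_comm] at hgronwall

theorem le_max_of_deriv_le (hab : a ≤ b) (hk : 0 ≤ k)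
    (hu : ∀ s ∈ Icc a b, HasDerivAt u (u' s) s) (hle : ∀ s ∈ Ico a b, u' s ≤ -k * (u s - m)) :
    u b ≤ max (u a) m := by
  have hexp : Real.exp (-k * (b - a)) ≤ 1 :=
    Real.exp_le_one_iff.2 (mul_nonpos_of_nonpos_of_nonneg (neg_nonpos.2 hk) (sub_nonneg.2 hab))
  have hnonneg : 0 ≤ max (u a) m - m := sub_nonneg.2 (le_max_right _ _)
  have : u b - m ≤ max (u a) m - m :=
    calc u b - m ≤ Real.exp (-k * (b - a)) * (u a - m) := sub_le_exp_mul_sub_of_deriv_le hab hu hle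
      _ ≤ Real.exp (-k * (b - a)) * (max (u a) m - m) := by gcongr; exact le_max_left _ _
      _ ≤ max (u a) m - m := mul_le_of_le_one_left hnonneg hexp
  linarith

theorem pos_of_mul_self_le_deriv {g : ℝ → ℝ} (hg : ContinuousOn g (Ici a))
    (hu : ∀ s ∈ Ici a, HasDerivAt u (u' s) s) (hle : ∀ s ∈ Ici a, g s * u s ≤ u' s)
    (ha : 0 < u a) : ∀ s ∈ Ici a, 0 < u s := by
  suffices ∀ t, a ≤ t → -u t < 0 from fun s hs => neg_lt_zero.1 (this s hs)
  refine lt_of_forall_Ico_lt (fun s hs => (hu s hs).neg.continuousAt.continuousWithinAt)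
    fun t hat hpos => ?_
  have hg_Icc : ContinuousOn g (Icc a t) := hg.mono Icc_subset_Ici_self
  obtain ⟨K, hK⟩ := isCompact_Icc.bddBelow_image hg_Icc
  have hdecay := sub_le_exp_mul_sub_of_deriv_le (u := fun s => -u s) (k := -K) (m := 0) hat
    (fun s hs => (hu s hs.1).neg) fun s hs => by
      have hKg : K ≤ g s := hK (mem_image_of_mem g (Ico_subset_Icc_self hs))
      have hKu := mul_le_mul_of_nonneg_right hKg (neg_lt_zero.1 (hpos s hs)).le
      linarith [hle s hs.1]
  simp only [sub_zero] at hdecay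
  exact hdecay.trans_lt (mul_neg_of_pos_of_neg (Real.exp_pos _) (neg_lt_zero.2 ha))

end Comparison

section Asymptotics

variable {u u' f k : ℝ → ℝ} {c l κ : ℝ}

theorem tendsto_atTop_of_le_deriv_s5 (hc : 0 < c) (hu : ∀ᶠ s in atTop, HasDerivAt u (u' s) s)
    (hle : ∀ᶠ s in atTop, c ≤ u' s) : Tendsto u atTop atTop := by
  obtain ⟨a, ha⟩ := eventually_atTop.1 (hu.and hle)
  have hlinear : Tendsto (fun s => u a + c * (s - a)) atTop atTop :=
    tendsto_atTop_add_const_left _ _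
      ((tendsto_atTop_add_const_right _ (-a) tendsto_id).const_mul_atTop hc)
  refine tendsto_atTop_mono' _ ?_ hlinear
  filter_upwards [eventually_ge_atTop a] with s hs
  have hmean := (convex_Ici a).mul_sub_le_image_sub_of_le_deriv
    (fun t ht => (ha t ht).1.continuousAt.continuousWithinAt)
    (fun t ht => (ha t (interior_subset ht)).1.differentiableAt.differentiableWithinAt)
    (fun t ht => (ha t (interior_subset ht)).2.trans_eq (ha t (interior_subset ht)).1.deriv.symm)
    a self_mem_Ici s hs hs
  linarith

theorem tendsto_zero_of_deriv_le (hκ : 0 < κ) (hu : ∀ᶠ s in atTop, HasDerivAt u (u' s) s)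
    (hle : ∀ᶠ s in atTop, u' s ≤ -κ * u s + f s) (hnonneg : ∀ᶠ s in atTop, 0 ≤ u s)
    (hf : Tendsto f atTop (𝓝 0)) : Tendsto u atTop (𝓝 0) := by
  refine tendsto_order.2 ⟨fun b hb => hnonneg.mono fun s hs => hb.trans_le hs, fun ε hε => ?_⟩
  have hsmall : ∀ᶠ s in atTop, f s < κ * (ε / 2) := hf.eventually_lt_const (by positivity)
  obtain ⟨a, ha⟩ := eventually_atTop.1 (hu.and (hle.and hsmall))
  have hexp : Tendsto (fun s => Real.exp (-κ * (s - a)) * (u a - ε / 2)) atTop (𝓝 0) := by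
    have : Tendsto (fun s : ℝ => -κ * (s - a)) atTop atBot :=
      (tendsto_atTop_add_const_right _ (-a) tendsto_id).const_mul_atTop_of_neg (neg_neg_of_pos hκ)
    simpa using (Real.tendsto_exp_atBot.comp this).mul_const (u a - ε / 2)
  filter_upwards [hexp.eventually_lt_const (half_pos hε), eventually_ge_atTop a] with s hs has
  have hdecay : u s - ε / 2 ≤ Real.exp (-κ * (s - a)) * (u a - ε / 2) :=
    sub_le_exp_mul_sub_of_deriv_le has (fun t ht => (ha t ht.1).1) fun t ht => by
      obtain ⟨-, hle_t, hsmall_t⟩ := ha t ht.1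
      linarith
  linarith

theorem tendsto_div_of_hasDerivAt_neg_mul_add_s5 (hκ : 0 < κ)
    (hu : ∀ᶠ s in atTop, HasDerivAt u (-k s * u s + f s) s)
    (hk : Tendsto k atTop (𝓝 κ)) (hf : Tendsto f atTop (𝓝 l)) :
    Tendsto u atTop (𝓝 (l / κ)) := by
  set m := l / κ
  have hforcing : Tendsto (fun s => 2 / κ * (f s - k s * m) ^ 2) atTop (𝓝 0) := by
    have := ((hf.sub (hk.mul_const m)).pow 2).const_mul (2 / κ)
    rwa [mul_div_cancel₀ l hκ.ne', sub_self, zero_pow two_ne_zero, mul_zero] at this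
  -- The sign of `u - m` is unknown, so a lower bound on the variable rate `k` only helps in the
  -- equation for the square.
  have hsq : Tendsto (fun s => (u s - m) ^ 2) atTop (𝓝 0) := by
    refine tendsto_zero_of_deriv_le (u' := fun s => 2 * (u s - m) * (-k s * u s + f s)) hκ
      ?_ ?_ (Eventually.of_forall fun s => sq_nonneg _) hforcing
    · filter_upwards [hu] with s hs
      simpa using (hs.sub_const m).fun_pow 2
    · filter_upwards [hk.eventually_const_le (show 3 / 4 * κ < κ by linarith)] with s hs
      set v := u s - m with hv
      set g := f s - k s * m with hg
      have hamgm : 2 * v * g ≤ κ / 2 * v ^ 2 + 2 / κ * g ^ 2 := by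
        simpa only [inv_div] using two_mul_le_add_mul_sq (half_pos hκ)
      calc 2 * v * (-k s * u s + f s) = 2 * v * g - 2 * k s * v ^ 2 := by rw [hv, hg]; ring
        _ ≤ κ / 2 * v ^ 2 + 2 / κ * g ^ 2 - 2 * (3 / 4 * κ) * v ^ 2 := by gcongr
        _ = -κ * v ^ 2 + 2 / κ * g ^ 2 := by ring
  have habs : Tendsto (fun s => |u s - m|) atTop (𝓝 0) := by
    simpa only [Real.sqrt_sq_eq_abs, Real.sqrt_zero] using hsq.sqrt
  exact tendsto_sub_nhds_zero_iff.1 ((tendsto_zero_iff_abs_tendsto_zero _).2 habs)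

end Asymptotics

theorem mul_mul_sq_sub_one_le {D x : ℝ} (hD : 0 < D) (hx : x ∈ Icc 0 (1 / D)) :
    x * (D * x ^ 2 - 1) ≤ -(1 - 1 / D) * x := by
  have hDx : D * x ^ 2 ≤ 1 / D :=
    calc D * x ^ 2 ≤ D * (1 / D) ^ 2 := by gcongr; exacts [hx.1, hx.2]
      _ = 1 / D := by field_simp
  linarith [mul_le_mul_of_nonneg_left hDx hx.1]

/-- `(X, Y)` solves the planar subsystem on `I`, with a real parameter `D` in the place of the
integer `d` of `IsSubsystemSol`. -/
structure IsRealSubsystemSol_s5 (D : ℝ) (X Y : ℝ → ℝ) (I : Set ℝ) : Prop where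
  hasDerivAt_X : ∀ s ∈ I, HasDerivAt X (X s * (D * X s ^ 2 - 1) + (D - 1) * Y s ^ 2) s
  hasDerivAt_Y : ∀ s ∈ I, HasDerivAt Y (X s * Y s * (D * X s - 1)) s

namespace IsRealSubsystemSol_s5

section Pointwise

variable {D s : ℝ} {X Y : ℝ → ℝ} {I : Set ℝ}

theorem continuousOn_X (h : IsRealSubsystemSol_s5 D X Y I) : ContinuousOn X I :=
  fun s hs => (h.hasDerivAt_X s hs).continuousAt.continuousWithinAt

theorem hasDerivAt_one_div_sq_Y (h : IsRealSubsystemSol_s5 D X Y I) (hs : s ∈ I) (hY : Y s ≠ 0) :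
    HasDerivAt (fun s => 1 / Y s ^ 2) (2 * (X s / Y s ^ 2) * (1 - D * X s)) s := by
  refine ((hasDerivAt_const s 1).fun_div ((h.hasDerivAt_Y s hs).fun_pow 2)
    (pow_ne_zero 2 hY)).congr_deriv ?_
  field_simp
  ring

theorem hasDerivAt_X_div_sq_Y (h : IsRealSubsystemSol_s5 D X Y I) (hs : s ∈ I) (hY : Y s ≠ 0) :
    HasDerivAt (fun s => X s / Y s ^ 2)
      (-(1 - 2 * X s + D * X s ^ 2) * (X s / Y s ^ 2) + (D - 1)) s := by
  refine ((h.hasDerivAt_X s hs).fun_div ((h.hasDerivAt_Y s hs).fun_pow 2)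
    (pow_ne_zero 2 hY)).congr_deriv ?_
  field_simp
  ring

theorem hasDerivAt_one_div_sq_Y_mul_sub (h : IsRealSubsystemSol_s5 D X Y I) (hs : s ∈ I)
    (hY : Y s ≠ 0) :
    HasDerivAt (fun s => 1 / Y s ^ 2 * (X s / Y s ^ 2 - (D - 1)))
      (-(1 - 2 * X s * (1 - D * X s)) * (1 / Y s ^ 2 * (X s / Y s ^ 2 - (D - 1))) +
        (X s / Y s ^ 2) ^ 2 * (2 - D * X s)) s := by
  refine ((h.hasDerivAt_one_div_sq_Y hs hY).fun_mul
    ((h.hasDerivAt_X_div_sq_Y hs hY).sub_const (D - 1))).congr_deriv ?_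
  field_simp
  ring

end Pointwise

section Box

variable {D a : ℝ} {X Y : ℝ → ℝ}

theorem Y_pos (h : IsRealSubsystemSol_s5 D X Y (Ici a)) (hY₀ : 0 < Y a) : ∀ s ∈ Ici a, 0 < Y s := by
  have hcont := h.continuousOn_X
  exact pos_of_mul_self_le_deriv (g := fun s => X s * (D * X s - 1)) (by fun_prop)
    h.hasDerivAt_Y (fun s _ => le_of_eq (by ring)) hY₀

theorem X_pos (h : IsRealSubsystemSol_s5 D X Y (Ici a)) (hD : 1 ≤ D) (hX₀ : 0 < X a) :
    ∀ s ∈ Ici a, 0 < X s := by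
  have hcont := h.continuousOn_X
  refine pos_of_mul_self_le_deriv (g := fun s => D * X s ^ 2 - 1) (by fun_prop)
    h.hasDerivAt_X (fun s _ => ?_) hX₀
  have : 0 ≤ (D - 1) * Y s ^ 2 := mul_nonneg (sub_nonneg.2 hD) (sq_nonneg _)
  linarith

theorem Y_le_of_forall_Ico_X_lt (h : IsRealSubsystemSol_s5 D X Y (Ici a)) (hD : 1 ≤ D)
    (hX₀ : 0 < X a) (hY₀ : 0 < Y a) {t : ℝ} (hat : a ≤ t) (hX : ∀ s ∈ Ico a t, X s < 1 / D) :
    Y t ≤ Y a := by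
  suffices Y t ≤ max (Y a) (Y a) by rwa [max_self] at this
  refine le_max_of_deriv_le hat le_rfl (fun s hs => h.hasDerivAt_Y s hs.1) fun s hs => ?_
  have hXY := mul_pos (h.X_pos hD hX₀ s hs.1) (h.Y_pos hY₀ s hs.1)
  have hDX : D * X s < 1 := (lt_div_iff₀' (by linarith)).1 (hX s hs)
  simpa using mul_nonpos_of_nonneg_of_nonpos hXY.le (sub_nonpos.2 hDX.le)

theorem X_le_max_of_forall_Ico_X_lt (h : IsRealSubsystemSol_s5 D X Y (Ici a)) (hD : 1 ≤ D)
    (hX₀ : 0 < X a) (hY₀ : 0 < Y a) {t : ℝ} (hat : a ≤ t) (hX : ∀ s ∈ Ico a t, X s < 1 / D) :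
    X t ≤ max (X a) (D * Y a ^ 2) := by
  have hD₀ : 0 < D := by linarith
  have hk : 0 ≤ 1 - 1 / D := sub_nonneg.2 ((div_le_one hD₀).2 hD)
  refine le_max_of_deriv_le hat hk (fun s hs => h.hasDerivAt_X s hs.1) fun s hs => ?_
  have hY : Y s ≤ Y a :=
    h.Y_le_of_forall_Ico_X_lt hD hX₀ hY₀ hs.1 fun r hr => hX r ⟨hr.1, hr.2.trans hs.2⟩
  calc X s * (D * X s ^ 2 - 1) + (D - 1) * Y s ^ 2
      ≤ -(1 - 1 / D) * X s + (D - 1) * Y s ^ 2 :=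
        by grw [mul_mul_sq_sub_one_le hD₀ ⟨(h.X_pos hD hX₀ s hs.1).le, (hX s hs).le⟩]
    _ ≤ -(1 - 1 / D) * X s + (D - 1) * Y a ^ 2 := by
        have := (h.Y_pos hY₀ s hs.1).le
        gcongr
    _ = -(1 - 1 / D) * (X s - D * Y a ^ 2) := by
        field_simp
        ring

theorem exists_X_le_lt_one_div (h : IsRealSubsystemSol_s5 D X Y (Ici a)) (hD : 1 ≤ D)
    (hX₀ : X a ∈ Ioo 0 (1 / D)) (hY₀ : Y a ∈ Ioo 0 (1 / D)) :
    ∃ M < 1 / D, ∀ s ∈ Ici a, X s ≤ M := by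
  have hbound {t : ℝ} := h.X_le_max_of_forall_Ico_X_lt hD hX₀.1 hY₀.1 (t := t)
  have hM : max (X a) (D * Y a ^ 2) < 1 / D := by
    refine max_lt hX₀.2 ?_
    calc D * Y a ^ 2 < D * (1 / D) ^ 2 := by gcongr; exacts [hY₀.1.le, hY₀.2]
      _ = 1 / D := by field_simp
  have hX_lt : ∀ t, a ≤ t → X t < 1 / D :=
    lt_of_forall_Ico_lt h.continuousOn_X fun t hat hX => (hbound hat hX).trans_lt hM
  exact ⟨_, hM, fun s hs => hbound hs fun r hr => hX_lt r hr.1⟩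

theorem X_mem_Ioo (h : IsRealSubsystemSol_s5 D X Y (Ici a)) (hD : 1 ≤ D)
    (hX₀ : X a ∈ Ioo 0 (1 / D)) (hY₀ : Y a ∈ Ioo 0 (1 / D)) :
    ∀ s ∈ Ici a, X s ∈ Ioo 0 (1 / D) := by
  obtain ⟨M, hM, hXM⟩ := h.exists_X_le_lt_one_div hD hX₀ hY₀
  exact fun s hs => ⟨h.X_pos hD hX₀.1 s hs, (hXM s hs).trans_lt hM⟩

theorem min_le_X_div_sq_Y (h : IsRealSubsystemSol_s5 D X Y (Ici a)) (hD : 1 ≤ D)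
    (hX₀ : X a ∈ Ioo 0 (1 / D)) (hY₀ : Y a ∈ Ioo 0 (1 / D)) :
    ∀ s ∈ Ici a, min (X a / Y a ^ 2) (D - 1) ≤ X s / Y s ^ 2 := by
  intro t hat
  have hneg : -(X t / Y t ^ 2) ≤ max (-(X a / Y a ^ 2)) (-(D - 1)) := by
    refine le_max_of_deriv_le (u := fun s => -(X s / Y s ^ 2)) hat zero_le_one
      (fun s hs => (h.hasDerivAt_X_div_sq_Y hs.1 (h.Y_pos hY₀.1 s hs.1).ne').neg) fun s hs => ?_
    obtain ⟨hX, hX_lt⟩ := h.X_mem_Ioo hD hX₀ hY₀ s hs.1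
    have hDX : D * X s < 1 := (lt_div_iff₀' (by linarith)).1 hX_lt
    have : 0 ≤ X s * (2 - D * X s) * (X s / Y s ^ 2) :=
      mul_nonneg (mul_nonneg hX.le (by linarith)) (by positivity)
    linarith
  rwa [max_neg_neg, neg_le_neg_iff] at hneg

end Box

section Limits

variable {D a : ℝ} {X Y : ℝ → ℝ}

theorem tendsto_one_div_sq_Y (h : IsRealSubsystemSol_s5 D X Y (Ici a)) (hD : 1 < D)
    (hX₀ : X a ∈ Ioo 0 (1 / D)) (hY₀ : Y a ∈ Ioo 0 (1 / D)) :
    Tendsto (fun s => 1 / Y s ^ 2) atTop atTop := by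
  obtain ⟨M, hM, hXM⟩ := h.exists_X_le_lt_one_div hD.le hX₀ hY₀
  have hDM : 0 < 1 - D * M := sub_pos.2 ((lt_div_iff₀' (by linarith)).1 hM)
  set p := min (X a / Y a ^ 2) (D - 1)
  have hp : 0 < p := lt_min (div_pos hX₀.1 (pow_pos hY₀.1 2)) (sub_pos.2 hD)
  have hge := eventually_ge_atTop a
  refine tendsto_atTop_of_le_deriv_s5 (c := 2 * p * (1 - D * M)) (by positivity)
    (hge.mono fun s hs => h.hasDerivAt_one_div_sq_Y hs (h.Y_pos hY₀.1 s hs).ne') ?_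
  filter_upwards [hge] with s hs
  have hpP := h.min_le_X_div_sq_Y hD.le hX₀ hY₀ s hs
  have hX := hXM s hs
  have := hp.le.trans hpP
  gcongr

theorem tendsto_X (h : IsRealSubsystemSol_s5 D X Y (Ici a)) (hD : 1 < D)
    (hX₀ : X a ∈ Ioo 0 (1 / D)) (hY₀ : Y a ∈ Ioo 0 (1 / D)) : Tendsto X atTop (𝓝 0) := by
  have hD₀ : 0 < D := by linarith
  have hge := eventually_ge_atTop a
  have hX := h.X_mem_Ioo hD.le hX₀ hY₀
  have hY : Tendsto (fun s => Y s ^ 2) atTop (𝓝 0) := by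
    simpa [Function.comp_def] using
      tendsto_inv_atTop_zero.comp (h.tendsto_one_div_sq_Y hD hX₀ hY₀)
  refine tendsto_zero_of_deriv_le (f := fun s => (D - 1) * Y s ^ 2)
    (sub_pos.2 ((div_lt_one hD₀).2 hD)) (hge.mono h.hasDerivAt_X)
    (hge.mono fun s hs => ?_) (hge.mono fun s hs => (hX s hs).1.le) ?_
  · grw [mul_mul_sq_sub_one_le hD₀ (Ioo_subset_Icc_self (hX s hs))]
  · simpa using hY.const_mul (D - 1)

theorem tendsto_X_div_sq_Y (h : IsRealSubsystemSol_s5 D X Y (Ici a)) (hD : 1 < D)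
    (hX₀ : X a ∈ Ioo 0 (1 / D)) (hY₀ : Y a ∈ Ioo 0 (1 / D)) :
    Tendsto (fun s => X s / Y s ^ 2) atTop (𝓝 (D - 1)) := by
  have hX := h.tendsto_X hD hX₀ hY₀
  have hk : Tendsto (fun s => 1 - 2 * X s + D * X s ^ 2) atTop (𝓝 1) := by
    simpa using ((hX.const_mul 2).const_sub 1).add ((hX.pow 2).const_mul D)
  simpa only [div_one] using tendsto_div_of_hasDerivAt_neg_mul_add_s5 one_pos
    ((eventually_ge_atTop a).mono fun s hs =>
      h.hasDerivAt_X_div_sq_Y hs (h.Y_pos hY₀.1 s hs).ne') hk tendsto_const_nhds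

end Limits

end IsRealSubsystemSol_s5

theorem stmt_5_general {D a : ℝ} {X Y : ℝ → ℝ} (hD : 1 < D)
    (h : IsRealSubsystemSol_s5 D X Y (Ici a))
    (hX₀ : X a ∈ Ioo 0 (1 / D)) (hY₀ : Y a ∈ Ioo 0 (1 / D)) :
    Tendsto (fun s => (1 / Y s ^ 2) * (X s / Y s ^ 2 - (D - 1))) atTop
      (𝓝 (2 * (D - 1) ^ 2)) := by
  have hX := h.tendsto_X hD hX₀ hY₀
  have hP := h.tendsto_X_div_sq_Y hD hX₀ hY₀
  have hk : Tendsto (fun s => 1 - 2 * X s * (1 - D * X s)) atTop (𝓝 1) := by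
    simpa using ((hX.const_mul 2).mul ((hX.const_mul D).const_sub 1)).const_sub 1
  have hf : Tendsto (fun s => (X s / Y s ^ 2) ^ 2 * (2 - D * X s)) atTop
      (𝓝 (2 * (D - 1) ^ 2)) := by
    simpa [mul_comm] using (hP.pow 2).mul ((hX.const_mul D).const_sub 2)
  simpa only [div_one] using tendsto_div_of_hasDerivAt_neg_mul_add_s5 one_pos
    ((eventually_ge_atTop a).mono fun s hs =>
      h.hasDerivAt_one_div_sq_Y_mul_sub hs (h.Y_pos hY₀.1 s hs).ne') hk hf

/-- Along trajectories in the region `0 < X, Y < 1/d`,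
`(1/Y²)(X/Y² − (d−1)) → 2(d−1)²`. -/
theorem stmt_5 (d : ℕ) (hd : 2 ≤ d) (s₀ : ℝ) (X Y : ℝ → ℝ)
    (hsol : IsSubsystemSol d X Y (Set.Ici s₀))
    (hX₀ : 0 < X s₀ ∧ X s₀ < 1 / d) (hY₀ : 0 < Y s₀ ∧ Y s₀ < 1 / d) :
    Tendsto (fun s => (1 / Y s ^ 2) * (X s / Y s ^ 2 - ((d : ℝ) - 1))) atTop
      (𝓝 (2 * ((d : ℝ) - 1) ^ 2)) :=
  stmt_5_general (Nat.one_lt_cast.2 hd) ⟨hsol.1, hsol.2⟩ hX₀ hY₀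
end

section
/- Let (𝓛, X₁,…,X_r, Y₁,…,Y_r) be a solution of the expanding Ricci soliton ODE system defined on [s₀, ∞). If 𝒮₁(s₀) < 0 and 𝒮₂(s₀) < 0, then 𝒮₁(s) < 0 and 𝒮₂(s) < 0 for all s ≥ s₀. -/
open Filter Topology

/-- `(𝓛, X₁,…,X_r, Y₁,…,Y_r)` solves the expanding Ricci soliton ODE system
`𝓛' = 𝓛(∑ⱼ dⱼXⱼ² − (ε/2)𝓛²)`,
`Xᵢ' = Xᵢ(∑ⱼ dⱼXⱼ² − (ε/2)𝓛² − 1) + μᵢYᵢ² + (ε/2)𝓛²`,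
`Yᵢ' = Yᵢ(∑ⱼ dⱼXⱼ² − (ε/2)𝓛² − Xᵢ)` on the set `I`. -/
def IsSolitonSol (r : ℕ) (d : Fin r → ℕ) (μ : Fin r → ℝ) (ε : ℝ)
    (L : ℝ → ℝ) (X Y : Fin r → ℝ → ℝ) (I : Set ℝ) : Prop :=
  (∀ s ∈ I, HasDerivAt L
      (L s * (∑ j, (d j : ℝ) * X j s ^ 2 - ε / 2 * L s ^ 2)) s) ∧
  (∀ i, ∀ s ∈ I, HasDerivAt (X i)
      (X i s * (∑ j, (d j : ℝ) * X j s ^ 2 - ε / 2 * L s ^ 2 - 1)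
        + μ i * Y i s ^ 2 + ε / 2 * L s ^ 2) s) ∧
  (∀ i, ∀ s ∈ I, HasDerivAt (Y i)
      (Y i s * (∑ j, (d j : ℝ) * X j s ^ 2 - ε / 2 * L s ^ 2 - X i s)) s)

/-!
The equations make `(𝒮₁, 𝒮₂)` a solution of the linear system
`𝒮₁' = 2F 𝒮₁ + ε𝓛² 𝒮₂`, `𝒮₂' = 𝒮₁ + (F − 1) 𝒮₂`, where `F = ∑ⱼ dⱼXⱼ² − (ε/2)𝓛²`.
Its off-diagonal coefficients `ε𝓛²` and `1` are nonnegative, and such a system preserves the open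
negative orthant: as long as every component is negative on a compact interval, each one satisfies
`f' ≤ m f` for a lower bound `m` of its diagonal coefficient, hence by Grönwall stays below a
negative exponential and cannot be the first to vanish.
-/

open Set

section Invariance

lemma Icc_subset_of_isClosed_sdiff {α : Type*} [LinearOrder α] [TopologicalSpace α]
    [ClosedIicTopology α] [CompactIccSpace α] {a b : α} {U : Set α}
    (hU : IsClosed (Icc a b \ U)) (step : ∀ t ∈ Icc a b, Ico a t ⊆ U → t ∈ U) :
    Icc a b ⊆ U := by
  by_contra hsub
  obtain ⟨t, ⟨htI, htU⟩, hleast⟩ :=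
    (isCompact_Icc.of_isClosed_subset hU sdiff_subset).exists_isLeast (sdiff_nonempty.mpr hsub)
  refine htU (step t htI fun s hs => ?_)
  by_contra hsU
  exact hs.2.not_ge (hleast ⟨⟨hs.1, hs.2.le.trans htI.2⟩, hsU⟩)

variable {a b : ℝ}

lemma neg_of_hasDerivWithinAt_le_mul {f f' : ℝ → ℝ} {K : ℝ} (hab : a ≤ b)
    (hf : ContinuousOn f (Icc a b)) (hf' : ∀ t ∈ Ico a b, HasDerivWithinAt f (f' t) (Ici t) t)
    (hle : ∀ t ∈ Ico a b, f' t ≤ K * f t) (ha : f a < 0) : f b < 0 := by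
  have hgronwall : f b ≤ gronwallBound (f a) K 0 (b - a) :=
    le_gronwallBound_of_liminf_deriv_right_le hf
      (fun t ht _ hr => (hf' t ht).liminf_right_slope_le hr) le_rfl
      (fun t ht => by simpa using hle t ht) b (right_mem_Icc.mpr hab)
  rw [gronwallBound_ε0] at hgronwall
  exact hgronwall.trans_lt (mul_neg_of_neg_of_pos ha (Real.exp_pos _))

theorem forall_neg_of_hasDerivWithinAt_mul_add {ι : Type*} [Finite ι] {f p q : ι → ℝ → ℝ}
    (hf : ∀ i, ∀ t ∈ Icc a b, HasDerivWithinAt (f i) (p i t * f i t + q i t) (Icc a b) t)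
    (hp : ∀ i, BddBelow (p i '' Icc a b))
    (hq : ∀ t ∈ Icc a b, (∀ i, f i t < 0) → ∀ i, q i t ≤ 0)
    (ha : ∀ i, f i a < 0) : ∀ t ∈ Icc a b, ∀ i, f i t < 0 := by
  have hcont (i : ι) : ContinuousOn (f i) (Icc a b) := fun t ht => (hf i t ht).continuousWithinAt
  have hclosed : IsClosed (Icc a b \ {t | ∀ i, f i t < 0}) := by
    have hsdiff : Icc a b \ {t | ∀ i, f i t < 0} = ⋃ i, Icc a b ∩ f i ⁻¹' Ici 0 := by
      ext t
      simp
    rw [hsdiff]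
    exact isClosed_iUnion_of_finite fun i =>
      (hcont i).preimage_isClosed_of_isClosed isClosed_Icc isClosed_Ici
  refine Icc_subset_of_isClosed_sdiff hclosed fun t ht hneg i => ?_
  obtain ⟨m, hm⟩ := hp i
  have hsub : Ico a t ⊆ Ico a b := Ico_subset_Ico_right ht.2
  refine neg_of_hasDerivWithinAt_le_mul (K := m) ht.1
    ((hcont i).mono (Icc_subset_Icc_right ht.2))
    (fun s hs => (hf i s (Ico_subset_Icc_self (hsub hs))).mono_of_mem_nhdsWithin
      (Icc_mem_nhdsGE_of_mem (hsub hs))) (fun s hs => ?_) (ha i)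
  have hsI : s ∈ Icc a b := Ico_subset_Icc_self (hsub hs)
  have hdiag : p i s * f i s ≤ m * f i s :=
    mul_le_mul_of_nonpos_right (hm (mem_image_of_mem _ hsI)) (hneg hs i).le
  linarith [hq s hsI (hneg hs) i]

end Invariance

section Soliton

variable {ι : Type*} [Fintype ι]

/-- The quantity `∑ⱼ dⱼXⱼ² − (ε/2)𝓛²`, the logarithmic derivative of `𝓛` along the flow. -/
noncomputable def solitonRate (d : ι → ℝ) (ε : ℝ) (L : ℝ → ℝ) (X : ι → ℝ → ℝ) (s : ℝ) : ℝ :=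
  ∑ j, d j * X j s ^ 2 - ε / 2 * L s ^ 2

/-- The soliton system of `IsSolitonSol` for real weights `d` over an arbitrary finite index type.
Derivatives are taken within `I`, so that they are one-sided at endpoints of an interval. -/
structure IsSolitonSolWithin (d μ : ι → ℝ) (ε : ℝ) (L : ℝ → ℝ) (X Y : ι → ℝ → ℝ) (I : Set ℝ) :
    Prop where
  hasDerivWithinAt_L : ∀ s ∈ I, HasDerivWithinAt L (L s * solitonRate d ε L X s) I s
  hasDerivWithinAt_X : ∀ i, ∀ s ∈ I, HasDerivWithinAt (X i)
    (X i s * (solitonRate d ε L X s - 1) + μ i * Y i s ^ 2 + ε / 2 * L s ^ 2) I s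
  hasDerivWithinAt_Y : ∀ i, ∀ s ∈ I, HasDerivWithinAt (Y i)
    (Y i s * (solitonRate d ε L X s - X i s)) I s

/-- The function `𝒮₁`, with the dimension `n` written as the total weight `∑ᵢ dᵢ`. -/
noncomputable def solitonS₁ (d μ : ι → ℝ) (ε : ℝ) (L : ℝ → ℝ) (X Y : ι → ℝ → ℝ) (s : ℝ) : ℝ :=
  ∑ i, d i * X i s ^ 2 + ∑ i, d i * μ i * Y i s ^ 2 + (∑ i, d i - 1) * (ε / 2) * L s ^ 2 - 1

/-- The function `𝒮₂ = ∑ᵢ dᵢXᵢ − 1`. -/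
noncomputable def solitonS₂ (d : ι → ℝ) (X : ι → ℝ → ℝ) (s : ℝ) : ℝ :=
  ∑ i, d i * X i s - 1

lemma IsSolitonSol.isSolitonSolWithin {r : ℕ} {d : Fin r → ℕ} {μ : Fin r → ℝ} {ε : ℝ}
    {L : ℝ → ℝ} {X Y : Fin r → ℝ → ℝ} {I : Set ℝ} (h : IsSolitonSol r d μ ε L X Y I) :
    IsSolitonSolWithin (fun i => (d i : ℝ)) μ ε L X Y I where
  hasDerivWithinAt_L s hs := (h.1 s hs).hasDerivWithinAt
  hasDerivWithinAt_X i s hs := (h.2.1 i s hs).hasDerivWithinAt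
  hasDerivWithinAt_Y i s hs := (h.2.2 i s hs).hasDerivWithinAt

namespace IsSolitonSolWithin

variable {d μ : ι → ℝ} {ε : ℝ} {L : ℝ → ℝ} {X Y : ι → ℝ → ℝ} {I J : Set ℝ} {s : ℝ}

lemma mono (h : IsSolitonSolWithin d μ ε L X Y I) (hJI : J ⊆ I) :
    IsSolitonSolWithin d μ ε L X Y J where
  hasDerivWithinAt_L s hs := (h.hasDerivWithinAt_L s (hJI hs)).mono hJI
  hasDerivWithinAt_X i s hs := (h.hasDerivWithinAt_X i s (hJI hs)).mono hJI
  hasDerivWithinAt_Y i s hs := (h.hasDerivWithinAt_Y i s (hJI hs)).mono hJI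

lemma continuousOn_solitonRate (h : IsSolitonSolWithin d μ ε L X Y I) :
    ContinuousOn (solitonRate d ε L X) I := by
  have hL : ContinuousOn L I := fun s hs => (h.hasDerivWithinAt_L s hs).continuousWithinAt
  have hX (i : ι) : ContinuousOn (X i) I := fun s hs =>
    (h.hasDerivWithinAt_X i s hs).continuousWithinAt
  unfold solitonRate
  fun_prop

lemma hasDerivWithinAt_solitonS₁ (h : IsSolitonSolWithin d μ ε L X Y I) (hs : s ∈ I) :
    HasDerivWithinAt (solitonS₁ d μ ε L X Y)
      (2 * solitonRate d ε L X s * solitonS₁ d μ ε L X Y s + ε * L s ^ 2 * solitonS₂ d X s)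
      I s := by
  have hsumX := HasDerivWithinAt.fun_sum (u := Finset.univ) fun i _ =>
    ((h.hasDerivWithinAt_X i s hs).fun_pow 2).const_mul (d i)
  have hsumY := HasDerivWithinAt.fun_sum (u := Finset.univ) fun i _ =>
    ((h.hasDerivWithinAt_Y i s hs).fun_pow 2).const_mul (d i * μ i)
  have hL := ((h.hasDerivWithinAt_L s hs).fun_pow 2).const_mul ((∑ i, d i - 1) * (ε / 2))
  refine (((hsumX.add hsumY).add hL).sub_const 1).congr_deriv ?_
  set F := solitonRate d ε L X s with hF
  -- The cubic terms `± 2 dᵢμᵢXᵢYᵢ²` of the two sums cancel.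
  have hsummand (i : ι) :
      d i * (((2 : ℕ) : ℝ) * X i s ^ (2 - 1) *
          (X i s * (F - 1) + μ i * Y i s ^ 2 + ε / 2 * L s ^ 2)) +
        d i * μ i * (((2 : ℕ) : ℝ) * Y i s ^ (2 - 1) * (Y i s * (F - X i s))) =
      2 * (F - 1) * (d i * X i s ^ 2) + 2 * F * (d i * μ i * Y i s ^ 2) +
        ε * L s ^ 2 * (d i * X i s) := by
    push_cast
    ring
  rw [← Finset.sum_add_distrib, Finset.sum_congr rfl fun i _ => hsummand i]
  simp only [Finset.sum_add_distrib, ← Finset.mul_sum, solitonS₁, solitonS₂]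
  rw [solitonRate] at hF
  push_cast
  linear_combination 2 * hF

lemma hasDerivWithinAt_solitonS₂ (h : IsSolitonSolWithin d μ ε L X Y I) (hs : s ∈ I) :
    HasDerivWithinAt (solitonS₂ d X)
      ((solitonRate d ε L X s - 1) * solitonS₂ d X s + solitonS₁ d μ ε L X Y s) I s := by
  have hsumX := HasDerivWithinAt.fun_sum (u := Finset.univ) fun i _ =>
    (h.hasDerivWithinAt_X i s hs).const_mul (d i)
  refine (hsumX.sub_const 1).congr_deriv ?_
  set F := solitonRate d ε L X s with hF
  have hsummand (i : ι) :
      d i * (X i s * (F - 1) + μ i * Y i s ^ 2 + ε / 2 * L s ^ 2) =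
        (F - 1) * (d i * X i s) + d i * μ i * Y i s ^ 2 + d i * (ε / 2 * L s ^ 2) := by
    ring
  rw [Finset.sum_congr rfl fun i _ => hsummand i]
  simp only [Finset.sum_add_distrib, ← Finset.mul_sum, ← Finset.sum_mul, solitonS₁, solitonS₂]
  rw [solitonRate] at hF
  linear_combination hF

end IsSolitonSolWithin

theorem stmt_7_general {d μ : ι → ℝ} {ε : ℝ} {L : ℝ → ℝ} {X Y : ι → ℝ → ℝ} {I : Set ℝ}
    {s₀ s : ℝ} (hsol : IsSolitonSolWithin d μ ε L X Y I) (hε : 0 ≤ ε) (hI : I.OrdConnected)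
    (hs₀ : s₀ ∈ I) (hs : s ∈ I) (hle : s₀ ≤ s)
    (h₀ : solitonS₁ d μ ε L X Y s₀ < 0 ∧ solitonS₂ d X s₀ < 0) :
    solitonS₁ d μ ε L X Y s < 0 ∧ solitonS₂ d X s < 0 := by
  replace hsol := hsol.mono (hI.out hs₀ hs)
  have hF := hsol.continuousOn_solitonRate
  have hneg := forall_neg_of_hasDerivWithinAt_mul_add (a := s₀) (b := s)
    (f := ![solitonS₁ d μ ε L X Y, solitonS₂ d X])
    (p := ![fun t => 2 * solitonRate d ε L X t, fun t => solitonRate d ε L X t - 1])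
    (q := ![fun t => ε * L t ^ 2 * solitonS₂ d X t, solitonS₁ d μ ε L X Y])
    (Fin.forall_fin_two.mpr ⟨fun _ ht => hsol.hasDerivWithinAt_solitonS₁ ht,
      fun _ ht => hsol.hasDerivWithinAt_solitonS₂ ht⟩)
    (Fin.forall_fin_two.mpr ⟨isCompact_Icc.bddBelow_image (hF.const_mul 2),
      isCompact_Icc.bddBelow_image (hF.sub continuousOn_const)⟩)
    (fun t _ ht => Fin.forall_fin_two.mpr
      ⟨mul_nonpos_of_nonneg_of_nonpos (by positivity) (ht 1).le, (ht 0).le⟩)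
    (Fin.forall_fin_two.mpr h₀)
  exact Fin.forall_fin_two.mp (hneg s (right_mem_Icc.mpr hle))

end Soliton

/-- The locus `{𝒮₁ < 0} ∩ {𝒮₂ < 0}` is preserved by the soliton ODE. -/
theorem stmt_7 (r : ℕ) (hr : 1 ≤ r) (d : Fin r → ℕ) (hd : ∀ i, 0 < d i)
    (μ : Fin r → ℝ) (ε : ℝ) (hε : 0 < ε) (n : ℕ) (hn : n = ∑ i, d i)
    (s₀ : ℝ) (L : ℝ → ℝ) (X Y : Fin r → ℝ → ℝ)
    (hsol : IsSolitonSol r d μ ε L X Y (Set.Ici s₀))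
    (S₁ S₂ : ℝ → ℝ)
    (hS₁ : ∀ s, S₁ s = ∑ i, (d i : ℝ) * X i s ^ 2 + ∑ i, (d i : ℝ) * μ i * Y i s ^ 2
        + ((n : ℝ) - 1) * (ε / 2) * L s ^ 2 - 1)
    (hS₂ : ∀ s, S₂ s = ∑ i, (d i : ℝ) * X i s - 1)
    (h₀ : S₁ s₀ < 0 ∧ S₂ s₀ < 0) :
    ∀ s ≥ s₀, S₁ s < 0 ∧ S₂ s < 0 := by
  obtain rfl : S₁ = solitonS₁ (fun i => (d i : ℝ)) μ ε L X Y := by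
    funext s
    simp [hS₁, solitonS₁, hn]
  obtain rfl : S₂ = solitonS₂ (fun i => (d i : ℝ)) X := funext hS₂
  exact fun s hs => stmt_7_general hsol.isSolitonSolWithin hε.le ordConnected_Ici
    self_mem_Ici hs hs h₀
end

section
/- Assume d₁ ≥ 2, μ₁ = d₁ − 1 and μᵢ = 0 for i = 2,…,r. Let (𝓛, X₁,…,X_r, Y₁,…,Y_r) be a solution of the expanding Ricci soliton ODE system on [s₀, ∞) with X₁(s) > 0, Y₁(s) > 0, X₁(s) ≥ Xᵢ(s) ≥ 0 for i = 2,…,r, and 𝓛(s) ≥ 0 for all s ≥ s₀. Define Z = ((d₁−1)Y₁² + (ε/2)𝓛²)/X₁. If Y₁(s₀)/X₁(s₀) > √((n−1)/(d₁−1)) and 1 − X₁(s₀) − Z(s₀) > 0, then the function s ↦ Y₁(s)/X₁(s) is non-decreasing on [s₀, ∞). -/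
open Filter Topology

/-! Write `W = 1 - X₁ - Z`, where `Z = (μ₁Y₁² + (ε/2)𝓛²)/X₁`. The quotient rule gives
`(Y₁/X₁)' = (Y₁/X₁) W`, so the theorem amounts to `W ≥ 0`, and
`W' = W (∑ⱼ dⱼXⱼ² - (ε/2)𝓛² + X₁ - Z) + (X₁² + μ₁Y₁² - ∑ⱼ dⱼXⱼ²)`.
At a first zero of `W` the ratio `Y₁/X₁` has not decreased since `s₀`, hence
`∑ⱼ dⱼXⱼ² ≤ n X₁² < X₁² + μ₁Y₁²`, and `W' > 0` there: `W` cannot have come down to zero. -/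

open Set

lemma sum_mul_sq_le_sum_mul_sq {ι R : Type*} [CommRing R] [LinearOrder R]
    [IsStrictOrderedRing R] (t : Finset ι) {w x : ι → R} {M : R}
    (hw : ∀ i ∈ t, 0 ≤ w i) (hx : ∀ i ∈ t, |x i| ≤ M) :
    ∑ i ∈ t, w i * x i ^ 2 ≤ (∑ i ∈ t, w i) * M ^ 2 := by
  rw [Finset.sum_mul]
  exact Finset.sum_le_sum fun i hi =>
    mul_le_mul_of_nonneg_left (sq_le_sq.2 ((hx i hi).trans (le_abs_self M))) (hw i hi)

lemma exists_first_eq_of_continuousOn_Icc {α β : Type*}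
    [ConditionallyCompleteLinearOrder α] [DenselyOrdered α] [TopologicalSpace α]
    [OrderTopology α] [LinearOrder β] [TopologicalSpace β] [OrderClosedTopology β]
    {f : α → β} {a b : α} {v : β} (hab : a ≤ b) (hf : ContinuousOn f (Icc a b))
    (ha : v < f a) (hb : f b ≤ v) :
    ∃ c ∈ Ioc a b, f c = v ∧ ∀ x ∈ Ico a c, v < f x := by
  have hcompact : IsCompact (Icc a b ∩ f ⁻¹' {v}) :=
    isCompact_Icc.of_isClosed_subset
      (hf.preimage_isClosed_of_isClosed isClosed_Icc isClosed_singleton) inter_subset_left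
  obtain ⟨c, ⟨hc, hfc⟩, hleast⟩ :=
    hcompact.exists_isLeast (intermediate_value_Icc' hab hf ⟨hb, ha.le⟩)
  have hac : a ≠ c := by
    rintro rfl
    exact ha.ne' hfc
  refine ⟨c, ⟨hc.1.lt_of_ne hac, hc.2⟩, hfc, fun x hx => ?_⟩
  by_contra! hfx
  have hxb : x ≤ b := hx.2.le.trans hc.2
  obtain ⟨z, hz, hfz⟩ :=
    intermediate_value_Icc' hx.1 (hf.mono (Icc_subset_Icc_right hxb)) ⟨hfx, ha.le⟩
  exact (hz.2.trans_lt hx.2).not_ge (hleast ⟨⟨hz.1, hz.2.trans hxb⟩, hfz⟩)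

lemma eventually_nhdsLT_neg_of_deriv_pos {f : ℝ → ℝ} {t : ℝ} (hf' : 0 < deriv f t)
    (hft : f t = 0) : ∀ᶠ s in 𝓝[<] t, f s < 0 := by
  filter_upwards [(eventually_nhdsWithin_sign_eq_of_deriv_pos hf' hft).filter_mono
    nhdsWithin_le_nhds, self_mem_nhdsWithin] with s hsign hst
  rwa [← sign_eq_neg_one_iff, hsign, sign_eq_neg_one_iff, sub_neg]

lemma pos_of_deriv_pos_at_first_zero {f : ℝ → ℝ} {a : ℝ} (hf : ContinuousOn f (Ici a))
    (ha : 0 < f a)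
    (hderiv : ∀ t > a, (∀ s ∈ Ico a t, 0 < f s) → f t = 0 → 0 < deriv f t) :
    ∀ t ≥ a, 0 < f t := by
  by_contra! ⟨b, hab, hfb⟩
  obtain ⟨t, ht, hft, hpos⟩ :=
    exists_first_eq_of_continuousOn_Icc hab (hf.mono Icc_subset_Ici_self) ha hfb
  obtain ⟨s, hneg, hs⟩ :=
    ((eventually_nhdsLT_neg_of_deriv_pos (hderiv t ht.1 hpos hft) hft).and
      (Ico_mem_nhdsLT ht.1)).exists
  exact hneg.not_gt (hpos s hs)

/-- The quantity `Zᵢ = (μᵢYᵢ² + (ε/2)𝓛²)/Xᵢ` attached to the `i`-th factor; the paper's `Z` is the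
case of the first factor with `μ₁ = d₁ - 1`. -/
noncomputable def solitonZ {r : ℕ} (μ : Fin r → ℝ) (ε : ℝ) (L : ℝ → ℝ) (X Y : Fin r → ℝ → ℝ)
    (i : Fin r) (s : ℝ) : ℝ :=
  (μ i * Y i s ^ 2 + ε / 2 * L s ^ 2) / X i s

/-- The quantity `Wᵢ = 1 - Xᵢ - Zᵢ`, the logarithmic derivative of `Yᵢ/Xᵢ`. -/
noncomputable def solitonW {r : ℕ} (μ : Fin r → ℝ) (ε : ℝ) (L : ℝ → ℝ) (X Y : Fin r → ℝ → ℝ)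
    (i : Fin r) (s : ℝ) : ℝ :=
  1 - X i s - solitonZ μ ε L X Y i s

namespace IsSolitonSol

variable {r : ℕ} {d : Fin r → ℕ} {μ : Fin r → ℝ} {ε : ℝ} {L : ℝ → ℝ} {X Y : Fin r → ℝ → ℝ}
  {I J : Set ℝ} {i : Fin r} {s s₀ : ℝ}

lemma mono (h : IsSolitonSol r d μ ε L X Y I) (hJI : J ⊆ I) : IsSolitonSol r d μ ε L X Y J :=
  ⟨fun s hs => h.1 s (hJI hs), fun i s hs => h.2.1 i s (hJI hs),
    fun i s hs => h.2.2 i s (hJI hs)⟩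

lemma hasDerivAt_div (h : IsSolitonSol r d μ ε L X Y I) (hs : s ∈ I) (hX : X i s ≠ 0) :
    HasDerivAt (fun t => Y i t / X i t) (Y i s / X i s * solitonW μ ε L X Y i s) s := by
  refine ((h.2.2 i s hs).div (h.2.1 i s hs) hX).congr_deriv ?_
  rw [solitonW, solitonZ]
  field_simp
  ring

lemma hasDerivAt_solitonZ (h : IsSolitonSol r d μ ε L X Y I) (hs : s ∈ I) (hX : X i s ≠ 0) :
    HasDerivAt (solitonZ μ ε L X Y i)
      (solitonZ μ ε L X Y i s * (∑ j, (d j : ℝ) * X j s ^ 2 - ε / 2 * L s ^ 2 + 1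
        - solitonZ μ ε L X Y i s) - 2 * μ i * Y i s ^ 2) s := by
  have hnum := (((h.2.2 i s hs).fun_pow 2).const_mul (μ i)).fun_add
    (((h.1 s hs).fun_pow 2).const_mul (ε / 2))
  refine (hnum.fun_div (h.2.1 i s hs) hX).congr_deriv ?_
  rw [solitonZ]
  field_simp
  ring

lemma hasDerivAt_solitonW (h : IsSolitonSol r d μ ε L X Y I) (hs : s ∈ I) (hX : X i s ≠ 0) :
    HasDerivAt (solitonW μ ε L X Y i)
      (solitonW μ ε L X Y i s * (∑ j, (d j : ℝ) * X j s ^ 2 - ε / 2 * L s ^ 2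
        + X i s - solitonZ μ ε L X Y i s)
        + (X i s ^ 2 + μ i * Y i s ^ 2 - ∑ j, (d j : ℝ) * X j s ^ 2)) s := by
  refine (((h.2.1 i s hs).const_sub 1).sub (h.hasDerivAt_solitonZ hs hX)).congr_deriv ?_
  rw [solitonW]
  ring

lemma monotoneOn_div (h : IsSolitonSol r d μ ε L X Y I) (hI : Convex ℝ I)
    (hX : ∀ s ∈ I, 0 < X i s) (hY : ∀ s ∈ I, 0 ≤ Y i s)
    (hW : ∀ s ∈ I, 0 ≤ solitonW μ ε L X Y i s) :
    MonotoneOn (fun s => Y i s / X i s) I := by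
  have hderiv (s : ℝ) (hs : s ∈ I) := h.hasDerivAt_div hs (hX s hs).ne'
  exact monotoneOn_of_hasDerivWithinAt_nonneg hI
    (fun s hs => (hderiv s hs).continuousAt.continuousWithinAt)
    (fun s hs => (hderiv s (interior_subset hs)).hasDerivWithinAt)
    (fun s hs => have hs := interior_subset hs
      mul_nonneg (div_nonneg (hY s hs) (hX s hs).le) (hW s hs))

lemma solitonW_pos (h : IsSolitonSol r d μ ε L X Y (Ici s₀)) (hμ : 0 ≤ μ i)
    (hX : ∀ s ≥ s₀, 0 < X i s) (hY : ∀ s ≥ s₀, 0 ≤ Y i s) {C : ℝ}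
    (hsum : ∀ s ≥ s₀, ∑ j, (d j : ℝ) * X j s ^ 2 ≤ C * X i s ^ 2)
    (hratio : C < 1 + μ i * (Y i s₀ / X i s₀) ^ 2) (hW : 0 < solitonW μ ε L X Y i s₀) :
    ∀ s ≥ s₀, 0 < solitonW μ ε L X Y i s := by
  have hderiv (s : ℝ) (hs : s₀ ≤ s) := h.hasDerivAt_solitonW hs (hX s hs).ne'
  refine pos_of_deriv_pos_at_first_zero
    (fun s hs => (hderiv s hs).continuousAt.continuousWithinAt) hW fun t ht hpos hzero => ?_
  have hWnonneg : ∀ s ∈ Icc s₀ t, 0 ≤ solitonW μ ε L X Y i s := fun s hs =>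
    hs.2.lt_or_eq.elim (fun hst => (hpos s ⟨hs.1, hst⟩).le) fun hst => (hst ▸ hzero).ge
  have hmono : Y i s₀ / X i s₀ ≤ Y i t / X i t :=
    (h.mono Icc_subset_Ici_self).monotoneOn_div (convex_Icc s₀ t) (fun s hs => hX s hs.1)
      (fun s hs => hY s hs.1) hWnonneg (left_mem_Icc.2 ht.le) (right_mem_Icc.2 ht.le) ht.le
  have hratio₀ : 0 ≤ Y i s₀ / X i s₀ := div_nonneg (hY s₀ le_rfl) (hX s₀ le_rfl).le
  have hXt : 0 < X i t := hX t ht.le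
  have hgap : ∑ j, (d j : ℝ) * X j t ^ 2 < X i t ^ 2 + μ i * Y i t ^ 2 :=
    calc ∑ j, (d j : ℝ) * X j t ^ 2
      _ ≤ C * X i t ^ 2 := hsum t ht.le
      _ < (1 + μ i * (Y i s₀ / X i s₀) ^ 2) * X i t ^ 2 := by gcongr
      _ ≤ (1 + μ i * (Y i t / X i t) ^ 2) * X i t ^ 2 := by gcongr
      _ = X i t ^ 2 + μ i * Y i t ^ 2 := by field_simp
  rw [(hderiv t ht.le).deriv, hzero, zero_mul, zero_add]
  exact sub_pos.2 hgap

end IsSolitonSol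

theorem stmt_11_general {r : ℕ} {d : Fin r → ℕ} {μ : Fin r → ℝ} {ε s₀ : ℝ} {L : ℝ → ℝ}
    {X Y : Fin r → ℝ → ℝ} (hsol : IsSolitonSol r d μ ε L X Y (Ici s₀)) {i : Fin r} {n : ℕ}
    (hn : n = ∑ j, d j) (hμ : 0 ≤ μ i) (hpos : ∀ s ≥ s₀, 0 < X i s ∧ 0 ≤ Y i s)
    (hX : ∀ s ≥ s₀, ∀ j ≠ i, |X j s| ≤ X i s)
    (hratio : (n : ℝ) - 1 < μ i * (Y i s₀ / X i s₀) ^ 2)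
    (hW : 0 < solitonW μ ε L X Y i s₀) :
    MonotoneOn (fun s => Y i s / X i s) (Ici s₀) := by
  have hsum : ∀ s ≥ s₀, ∑ j, (d j : ℝ) * X j s ^ 2 ≤ n * X i s ^ 2 := by
    intro s hs
    rw [hn, Nat.cast_sum]
    refine sum_mul_sq_le_sum_mul_sq _ (fun j _ => Nat.cast_nonneg _) fun j _ => ?_
    obtain rfl | hji := eq_or_ne j i
    · exact (abs_of_pos (hpos s hs).1).le
    · exact hX s hs j hji
  have hWpos : ∀ s ≥ s₀, 0 < solitonW μ ε L X Y i s :=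
    hsol.solitonW_pos hμ (fun s hs => (hpos s hs).1) (fun s hs => (hpos s hs).2) hsum
      (sub_lt_iff_lt_add'.1 hratio) hW
  exact hsol.monotoneOn_div (convex_Ici s₀) (fun s hs => (hpos s hs).1)
    (fun s hs => (hpos s hs).2) fun s hs => (hWpos s hs).le

/-- Proposition 7.4 (a): with `μ₁ = d₁ − 1`, `μᵢ = 0` for `i ≥ 2`, if
`Y₁/X₁ > √((n−1)/(d₁−1))` and `1 − X₁ − Z > 0` at `s₀`, then `Y₁/X₁` is
non-decreasing on `[s₀, ∞)`.  Here the index `0 : Fin r` plays the role of `1`. -/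
theorem stmt_11 (r : ℕ) (hr : 1 ≤ r) (d : Fin r → ℕ) (hd : ∀ i, 0 < d i)
    (hd₁ : 2 ≤ d ⟨0, by omega⟩) (n : ℕ) (hn : n = ∑ i, d i)
    (μ : Fin r → ℝ) (hμ₁ : μ ⟨0, by omega⟩ = (d ⟨0, by omega⟩ : ℝ) - 1)
    (hμ : ∀ i : Fin r, i ≠ ⟨0, by omega⟩ → μ i = 0)
    (ε : ℝ) (hε : 0 < ε) (s₀ : ℝ) (L : ℝ → ℝ) (X Y : Fin r → ℝ → ℝ)
    (hsol : IsSolitonSol r d μ ε L X Y (Set.Ici s₀))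
    (hpos : ∀ s ≥ s₀, 0 < X ⟨0, by omega⟩ s ∧ 0 < Y ⟨0, by omega⟩ s)
    (hord : ∀ s ≥ s₀, ∀ i : Fin r, i ≠ ⟨0, by omega⟩ →
      0 ≤ X i s ∧ X i s ≤ X ⟨0, by omega⟩ s)
    (hL : ∀ s ≥ s₀, 0 ≤ L s)
    (Z : ℝ → ℝ)
    (hZ : ∀ s, Z s = (((d ⟨0, by omega⟩ : ℝ) - 1) * Y ⟨0, by omega⟩ s ^ 2
        + ε / 2 * L s ^ 2) / X ⟨0, by omega⟩ s)
    (h₀ : Y ⟨0, by omega⟩ s₀ / X ⟨0, by omega⟩ s₀ >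
      Real.sqrt (((n : ℝ) - 1) / ((d ⟨0, by omega⟩ : ℝ) - 1)))
    (h₀' : 0 < 1 - X ⟨0, by omega⟩ s₀ - Z s₀) :
    MonotoneOn (fun s => Y ⟨0, by omega⟩ s / X ⟨0, by omega⟩ s) (Set.Ici s₀) := by
  have hμpos : 0 < μ ⟨0, by omega⟩ := by rw [hμ₁, sub_pos]; exact_mod_cast hd₁
  rw [← hμ₁] at h₀
  rw [hZ, ← hμ₁] at h₀'
  exact stmt_11_general hsol hn hμpos.le (fun s hs => (hpos s hs).imp_right le_of_lt)
    (fun s hs j hj => (abs_of_nonneg (hord s hs j hj).1).trans_le (hord s hs j hj).2)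
    ((div_lt_iff₀' hμpos).1 (Real.lt_sq_of_sqrt_lt h₀)) h₀'
end
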